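/- arXiv:1701.05817 — 3 statements merged into one kernel-verified Lean document; each statement's English description precedes it below -/
import Mathlib

section
/- Every finitely generated projective module over the Laurent polynomial ring k[x₁, x₁⁻¹, ..., xₐ, xₐ⁻¹] over a field k is free. -/
open MvPolynomial

/-!
The proof is by induction on the number of variables, for all fields at once. Let `A` be the Laurent
polynomial ring in all variables but `T`, and `P` a finitely generated projective `A[T;T⁻¹]`-module.
Inverting the nonzero elements of `k[T;T⁻¹]` gives a Laurent polynomial ring over a field in one
variable less, so `P` becomes free there. Up to a unit, the denominators are monic polynomials in
`T` with unit constant coefficient, so there are maps `A[T;T⁻¹]^r → P → A[T;T⁻¹]^r` whose composites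
are both multiplication by such an element `s`. As `A[T;T⁻¹] / s` is finite and free over `A`, the
cokernel `W` of the first map is finite and projective over `A`, hence free by induction. Comparing
the presentation `A[T;T⁻¹]^r → P → W` with the characteristic sequence
`0 → A[T;T⁻¹] ⊗ W → A[T;T⁻¹] ⊗ W → W → 0` of the action of `T` on `W`, Schanuel's lemma shows that
`P` is stably free.

It remains to complete unimodular rows over `A[T;T⁻¹]` to invertible matrices. After a generic
change of coordinates `x ^ g ↦ T ^ h(g) * x ^ g` some entry is monic with unit constant coefficient
up to a unit, which reduces the row to a unimodular row over `A[T]` with a monic entry. By Suslin's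
theorem the latter is equivalent to its value at `T = 0`, where that entry is a unit.
-/

namespace SwanLaurent

/-! ### Vectors up to invertible matrices -/

section GLEquivalent

open scoped Matrix MatrixGroups

variable {ι : Type*} [Fintype ι] [DecidableEq ι] {A B : Type*} [CommRing A] [CommRing B]

/-- Two vectors are `GL`-equivalent if an invertible matrix carries one to the other. For
unimodular rows this is the relation `v ∼ w` of Lam's book on Serre's problem. -/
def GLEquivalent (v w : ι → A) : Prop :=
  ∃ M : GL ι A, M.val *ᵥ v = w

namespace GLEquivalent

variable {u v w : ι → A}

lemma refl (v : ι → A) : GLEquivalent v v :=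
  ⟨1, Matrix.one_mulVec v⟩

lemma trans (huv : GLEquivalent u v) (hvw : GLEquivalent v w) : GLEquivalent u w := by
  obtain ⟨M, rfl⟩ := huv
  obtain ⟨N, rfl⟩ := hvw
  exact ⟨N * M, (Matrix.mulVec_mulVec u N.val M.val).symm⟩

lemma symm (hvw : GLEquivalent v w) : GLEquivalent w v := by
  obtain ⟨M, rfl⟩ := hvw
  exact ⟨M⁻¹, by rw [Matrix.mulVec_mulVec, Units.inv_mul, Matrix.one_mulVec]⟩

lemma map {F : Type*} [FunLike F A B] [RingHomClass F A B] (f : F) (hvw : GLEquivalent v w) :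
    GLEquivalent (f ∘ v) (f ∘ w) := by
  obtain ⟨M, rfl⟩ := hvw
  exact ⟨.map (f : A →+* B) M, funext fun i ↦ ((f : A →+* B).map_mulVec M.val v i).symm⟩

lemma span_range_eq (hvw : GLEquivalent v w) :
    Ideal.span (Set.range v) = Ideal.span (Set.range w) := by
  suffices h : ∀ {v w : ι → A}, GLEquivalent v w →
      Ideal.span (Set.range w) ≤ Ideal.span (Set.range v) from
    (h hvw.symm).antisymm (h hvw)
  rintro v _ ⟨M, rfl⟩
  rw [Ideal.span_le]
  rintro _ ⟨i, rfl⟩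
  exact Ideal.sum_mem _ fun j _ ↦
    Ideal.mul_mem_left _ _ (Ideal.subset_span (Set.mem_range_self j))

lemma of_one_add_mul {κ : Type*} [Fintype κ] [DecidableEq κ] (U : Matrix ι κ A)
    (V : Matrix κ ι A) (h : IsUnit (1 + V * U).det) (v : ι → A) :
    GLEquivalent v (v + U *ᵥ (V *ᵥ v)) :=
  ⟨.mk'' (1 + U * V) (by rwa [Matrix.det_one_add_mul_comm]), by
    change (1 + U * V) *ᵥ v = _
    rw [Matrix.add_mulVec, Matrix.one_mulVec, Matrix.mulVec_mulVec]⟩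

lemma add_dotProduct_smul (v f z : ι → A) (h : IsUnit (1 + f ⬝ᵥ z)) :
    GLEquivalent v (v + (f ⬝ᵥ v) • z) := by
  convert of_one_add_mul (.replicateCol Unit z) (.replicateRow Unit f) (by simpa using h) v
  ext i
  simp [Matrix.mulVec, dotProduct, mul_comm]

lemma units_smul (c : Aˣ) (v : ι → A) : GLEquivalent v (c • v) :=
  ⟨.scalar ι c, by ext; simp [Matrix.mulVec_diagonal, Units.smul_def]⟩

lemma single_of_isUnit {i : ι} (h : IsUnit (v i)) : GLEquivalent v (Pi.single i 1) := by
  obtain ⟨c, hc⟩ := h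
  have h₁ : GLEquivalent v (v + (c⁻¹.val • Pi.single i 1 ⬝ᵥ v) • (Pi.single i 1 - v)) := by
    refine add_dotProduct_smul _ _ _ ?_
    simp [← hc]
  simpa [← hc] using h₁

lemma single_single (i j : ι) : GLEquivalent (Pi.single i (1 : A)) (Pi.single j 1) := by
  obtain rfl | hij := eq_or_ne i j
  · exact refl _
  · let v : ι → A := Pi.single i 1 + Pi.single j 1
    have hi : GLEquivalent v (Pi.single i 1) := single_of_isUnit (by simp [v, hij])
    have hj : GLEquivalent v (Pi.single j 1) := single_of_isUnit (by simp [v, hij.symm])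
    exact hi.symm.trans hj

/-- For `c` regular, the second relation is what remains of
`(p + c * π) * (v i + c * δ i) + (q + c * κ) * (v j + c * δ j) = c` after subtracting
`p * v i + q * v j = c` and dividing by `c`. -/
lemma add_smul_of_bezout {i j : ι} (hij : i ≠ j) (v δ : ι → A) {c p q π κ : A}
    (h : p * v i + q * v j = c)
    (h' : p * δ i + π * v i + q * δ j + κ * v j + c * (π * δ i + κ * δ j) = 0) :
    GLEquivalent v (v + c • δ) := by
  let U : Matrix ι (Fin 2) A := .of fun l ↦ δ l • ![p, q] +
    (Pi.single i ![κ * v j, -(κ * v i)] + Pi.single j ![-(π * v j), π * v i] : ι → Fin 2 → A) l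
  let V : Matrix (Fin 2) ι A := .of ![Pi.single i 1, Pi.single j 1]
  have hV (w : ι → A) : V *ᵥ w = ![w i, w j] := by
    ext l
    fin_cases l <;> simp [V, Matrix.mulVec]
  have hUi : U i = ![δ i * p + κ * v j, δ i * q - κ * v i] := by
    ext l
    fin_cases l <;> simp [U, hij, sub_eq_add_neg]
  have hUj : U j = ![δ j * p - π * v j, δ j * q + π * v i] := by
    ext l
    fin_cases l <;> simp [U, hij.symm, sub_eq_add_neg]
  have hVU : V * U = .of ![U i, U j] := by
    ext l m
    change (V *ᵥ fun x ↦ U x m) l = _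
    rw [hV]
    fin_cases l <;> rfl
  have hdet : (1 + V * U).det = 1 := by
    simp only [hVU, hUi, hUj, Matrix.det_fin_two, Matrix.add_apply, Matrix.of_apply,
      Matrix.one_apply, Matrix.cons_val_zero, Matrix.cons_val_one, if_true, one_ne_zero,
      zero_ne_one, if_false]
    linear_combination h' + (π * δ i + κ * δ j) * h
  have hU : U *ᵥ ![v i, v j] = c • δ := by
    ext l
    suffices U l 0 * v i + U l 1 * v j = c * δ l by
      simpa [Matrix.mulVec, dotProduct] using this
    obtain rfl | hi := eq_or_ne l i
    · simp only [hUi, Matrix.cons_val_zero, Matrix.cons_val_one]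
      linear_combination δ l * h
    obtain rfl | hj := eq_or_ne l j
    · simp only [hUj, Matrix.cons_val_zero, Matrix.cons_val_one]
      linear_combination δ l * h
    · have hUl : U l = ![δ l * p, δ l * q] := by
        ext m
        fin_cases m <;> simp [U, hi, hj]
      simp only [hUl, Matrix.cons_val_zero, Matrix.cons_val_one]
      linear_combination δ l * h
  simpa only [hV, hU] using of_one_add_mul U V (by simp [hdet]) v

end GLEquivalent

end GLEquivalent

/-! ### Suslin's theorem on unimodular vectors with a monic entry -/

section Suslin

open Polynomial

/-- The shift is a product of primes dividing `g` but not `x`: then each prime factor of `g`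
divides exactly one of the summands `x` and `a * h`. -/
lemma exists_isCoprime_add_mul {R : Type*} [CommRing R] [IsDomain R] [IsPrincipalIdealRing R]
    {g x h : R} (hg : g ≠ 0) (hxh : IsCoprime x h) : ∃ a, IsCoprime g (x + a * h) := by
  classical
  let s := (UniqueFactorizationMonoid.factors g).filter (¬ · ∣ x)
  refine ⟨s.prod, isCoprime_of_prime_dvd (fun hzero ↦ hg hzero.1) fun p hp hpg hpx ↦ ?_⟩
  by_cases hx : p ∣ x
  · rcases hp.dvd_or_dvd ((dvd_add_right hx).1 hpx) with hps | hph
    · obtain ⟨q, hq, hpq⟩ := hp.exists_mem_multiset_dvd hps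
      obtain ⟨hqg, hqx⟩ := Multiset.mem_filter.1 hq
      have hqi := UniqueFactorizationMonoid.irreducible_of_factor q hqg
      exact hqx ((hp.irreducible.associated_of_dvd hqi hpq).symm.dvd.trans hx)
    · exact hp.not_isUnit (hxh.isUnit_of_dvd' hx hph)
  · obtain ⟨q, hq, hpq⟩ :=
      UniqueFactorizationMonoid.exists_mem_factors_of_dvd hg hp.irreducible hpg
    have hqs : q ∈ s := Multiset.mem_filter.2 ⟨hq, fun hqx ↦ hx (hpq.dvd.trans hqx)⟩
    exact hx ((dvd_add_left ((hpq.dvd.trans (Multiset.dvd_prod hqs)).mul_right h)).1 hpx)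

/-- The constant is the resultant of `g` and `x`. -/
lemma exists_mul_add_mul_eq_C {A K : Type*} [CommRing A] [CommRing K] [IsDomain K] (φ : A →+* K)
    {g x : A[X]} (hg : g.Monic) (h : IsCoprime (g.map φ) (x.map φ)) :
    ∃ c, φ c ≠ 0 ∧ ∃ p q, p * g + q * x = .C c := by
  obtain hdeg | hdeg := eq_or_ne g.natDegree 0
  · exact ⟨1, by simp, 1, 0, by simp [hg.natDegree_eq_zero.1 hdeg]⟩
  obtain ⟨p, q, -, -, hpq⟩ :=
    exists_mul_add_mul_eq_C_resultant _ _ le_rfl le_rfl (.inl hdeg)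
  refine ⟨g.resultant x, ?_, p, q, by rw [← hpq]; ring⟩
  obtain ⟨k, hk⟩ := Nat.exists_eq_add_of_le (natDegree_map_le (f := φ) (p := x))
  rw [← resultant_map_map, hk, resultant_add_right_deg _ _ _ _ _ le_rfl,
    ← hg.natDegree_map φ, (hg.map φ).coeff_natDegree, one_pow, one_mul]
  exact resultant_ne_zero _ _ h

lemma exists_isCoprime_add_dotProduct {ι R : Type*} [Fintype ι] [CommRing R] [IsDomain R]
    [IsPrincipalIdealRing R] {u : ι → R} (hu : Ideal.span (Set.range u) = ⊤) {i : ι} (hi : u i ≠ 0)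
    (j : ι) : ∃ f : ι → R, f j = 0 ∧ IsCoprime (u i) (u j + f ⬝ᵥ u) := by
  classical
  obtain ⟨b, hb⟩ := Ideal.mem_span_range_iff_exists_fun.1 (hu ▸ Submodule.mem_top (x := (1 : R)))
  have hcoprime : IsCoprime (u j) (Function.update b j 0 ⬝ᵥ u) := by
    refine ⟨b j, 1, ?_⟩
    have hupdate : Function.update b j 0 = b - Pi.single j (b j) := by
      ext l
      obtain rfl | hl := eq_or_ne l j <;> simp [*]
    rw [hupdate, sub_dotProduct, single_dotProduct, dotProduct, hb]
    ring
  obtain ⟨a, ha⟩ := exists_isCoprime_add_mul hi hcoprime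
  exact ⟨a • Function.update b j 0, by simp, by rwa [smul_dotProduct]⟩

variable {ι : Type*} [Fintype ι] [DecidableEq ι] {A : Type*} [CommRing A]

namespace GLEquivalent

lemma eval_zero_eval {w : ι → A[X]} {i j : ι} (hij : i ≠ j) {p q : A[X]} {c : A}
    (h : p * w i + q * w j = .C c) :
    GLEquivalent (fun l ↦ (w l).eval 0) (fun l ↦ (w l).eval c) := by
  have hdiv (f : A[X]) : .X * f.divX + .C (f.eval 0) = f := by
    rw [← coeff_zero_eq_eval_zero, X_mul_divX_add]
  have heval (f : A[X]) : f.eval c = f.eval 0 + c * f.divX.eval c := by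
    conv_lhs => rw [← hdiv f]
    simp [add_comm]
  have h₀ : p.eval 0 * (w i).eval 0 + q.eval 0 * (w j).eval 0 = c := by
    simpa using congr_arg (eval 0) h
  have h₁ : .C (p.eval 0) * (w i).divX + p.divX * .C ((w i).eval 0)
      + .C (q.eval 0) * (w j).divX + q.divX * .C ((w j).eval 0)
      + .X * (p.divX * (w i).divX + q.divX * (w j).divX) = 0 := by
    refine isRegular_X.left ?_
    dsimp only
    have h₂ := congr_arg Polynomial.C h₀
    rw [map_add, map_mul, map_mul] at h₂
    linear_combination h - h₂ + w i * hdiv p + (.X * p.divX + .C (p.eval 0)) * hdiv (w i)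
      + w j * hdiv q + (.X * q.divX + .C (q.eval 0)) * hdiv (w j)
  convert add_smul_of_bezout hij (fun l ↦ (w l).eval 0) (fun l ↦ (w l).divX.eval c) h₀
    (by simpa using congr_arg (eval c) h₁) using 1
  exact funext fun l ↦ heval (w l)

lemma aeval_aeval_add {v : ι → A[X]} {i j : ι} (hij : i ≠ j) {p q : A[X]} {c : A}
    (h : p * v i + q * v j = .C c) {S : Type*} [CommRing S] [Algebra A S] (b z : S) :
    GLEquivalent (Polynomial.aeval b ∘ v) (Polynomial.aeval (b + c • z) ∘ v) := by
  let τ : A[X] →ₐ[A] S[X] := Polynomial.aeval (.C b + .C z * .X)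
  have hτ (s : S) (f : A[X]) : (τ f).eval s = Polynomial.aeval (b + z * s) f := by
    rw [← Polynomial.coe_aeval_eq_eval, ← AlgHom.restrictScalars_apply A, ← AlgHom.comp_apply]
    congr 1
    ext
    simp [τ]
  have hτh : τ p * τ (v i) + τ q * τ (v j) = .C (algebraMap A S c) := by
    rw [← map_mul, ← map_mul, ← map_add, h]
    exact τ.commutes c
  convert eval_zero_eval (w := τ ∘ v) hij hτh using 1
  · ext l
    simp [hτ]
  · ext l
    simp [hτ, Algebra.smul_def, mul_comm]

end GLEquivalent

/-- The ideal of all `c` such that `v(b)` and `v(b + c * z)` are `GL`-equivalent for all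
polynomials `b` and `z`. Suslin's theorem says that it is the unit ideal. -/
def periodIdeal (v : ι → A[X]) : Ideal A where
  carrier := {c | ∀ b z : A[X],
    GLEquivalent (Polynomial.aeval b ∘ v) (Polynomial.aeval (b + c • z) ∘ v)}
  add_mem' {c d} hc hd b z := by
    rw [add_smul, ← add_assoc]
    exact (hc b z).trans (hd _ z)
  zero_mem' b z := by
    rw [zero_smul, add_zero]
    exact .refl _
  smul_mem' a c hc b z := by
    rw [smul_assoc, smul_comm]
    exact hc b (a • z)

lemma mem_periodIdeal {v : ι → A[X]} {c : A} : c ∈ periodIdeal v ↔ ∀ b z : A[X],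
    GLEquivalent (Polynomial.aeval b ∘ v) (Polynomial.aeval (b + c • z) ∘ v) :=
  Iff.rfl

lemma GLEquivalent.periodIdeal_le {v w : ι → A[X]} (h : GLEquivalent v w) :
    periodIdeal w ≤ periodIdeal v := fun c hc ↦ mem_periodIdeal.2 fun b z ↦
  ((h.map (Polynomial.aeval b)).trans (mem_periodIdeal.1 hc b z)).trans
    (h.map (Polynomial.aeval (b + c • z))).symm

lemma periodIdeal_eq_top {v : ι → A[X]} {i j : ι} (hij : i ≠ j) (hi : (v i).Monic)
    (hv : Ideal.span (Set.range v) = ⊤) : periodIdeal v = ⊤ := by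
  by_contra hne
  obtain ⟨m, hm, hle⟩ := Ideal.exists_le_maximal _ hne
  let := Ideal.Quotient.field m
  let φ : A[X] →+* (A ⧸ m)[X] := mapRingHom (Ideal.Quotient.mk m)
  have hφ : Function.Surjective φ := map_surjective _ Ideal.Quotient.mk_surjective
  have hφv : Ideal.span (Set.range (φ ∘ v)) = ⊤ := by
    rw [Set.range_comp, ← Ideal.map_span, hv, Ideal.map_top]
  obtain ⟨f', hf'j, hcoprime⟩ := exists_isCoprime_add_dotProduct hφv (hi.map _).ne_zero j
  obtain ⟨f, hfj, rfl⟩ : ∃ f, f j = 0 ∧ φ ∘ f = f' := by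
    obtain ⟨f, rfl⟩ := hφ.comp_left f'
    refine ⟨Function.update f j 0, by simp, ?_⟩
    rw [Function.comp_update, map_zero, ← hf'j, Function.update_eq_self]
  let w := v + (f ⬝ᵥ v) • Pi.single j 1
  have hvw : GLEquivalent v w := .add_dotProduct_smul _ _ _ (by simp [hfj])
  have hwi : w i = v i := by simp [w, hij]
  have hwj : φ (w j) = (φ ∘ v) j + φ ∘ f ⬝ᵥ φ ∘ v := by simp [w, RingHom.map_dotProduct]
  obtain ⟨c, hcm, p, q, hpq⟩ :=
    exists_mul_add_mul_eq_C (Ideal.Quotient.mk m) (g := w i) (x := w j) (hwi ▸ hi) (by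
      rwa [← hwj, Function.comp_apply, ← hwi] at hcoprime)
  have hc : c ∈ periodIdeal w := fun b z ↦ GLEquivalent.aeval_aeval_add hij hpq b z
  exact hcm (Ideal.Quotient.eq_zero_iff_mem.2 (hle (hvw.periodIdeal_le hc)))

theorem GLEquivalent.C_eval_zero {v : ι → A[X]} {i j : ι} (hij : i ≠ j) (hi : (v i).Monic)
    (hv : Ideal.span (Set.range v) = ⊤) :
    GLEquivalent v (fun l ↦ .C ((v l).eval 0)) := by
  have h₁ : (1 : A) ∈ periodIdeal v := periodIdeal_eq_top hij hi hv ▸ Submodule.mem_top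
  convert mem_periodIdeal.1 h₁ .X (-.X) using 1
  · ext1 l
    simp
  · ext1 l
    simp [← Polynomial.coeff_zero_eq_aeval_zero', coeff_zero_eq_eval_zero]

end Suslin

/-! ### Doubly monic Laurent polynomials -/

section DoublyMonic

open Polynomial LaurentPolynomial

variable {A : Type*} [CommRing A]

/-- A Laurent polynomial is doubly monic if, up to a unit, it is a monic polynomial whose constant
coefficient is a unit. It plays the role of the monic entry in Suslin's theorem. -/
def IsDoublyMonic (f : A[T;T⁻¹]) : Prop :=
  ∃ g : A[X], g.Monic ∧ IsUnit (g.coeff 0) ∧ Associated (toLaurent g) f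

lemma coeff_toLaurent_natCast (p : A[X]) (n : ℕ) : (toLaurent p).coeff n = p.coeff n := by
  rw [LaurentPolynomial.coeff_toLaurent]
  exact Finsupp.mapDomain_apply Nat.castEmbedding.injective _ n

lemma exists_monic_C_mul_X_pow_mul_eq {p : A[X]} (hp : p ≠ 0)
    (hcoeff : ∀ n, p.coeff n = 0 ∨ IsUnit (p.coeff n)) :
    ∃ (u : Aˣ) (k : ℕ) (g : A[X]), g.Monic ∧ IsUnit (g.coeff 0) ∧
      Polynomial.C u.val * (.X : A[X]) ^ k * g = p := by
  obtain ⟨k, q, hq, rfl⟩ : ∃ (k : ℕ) (q : A[X]), q.coeff 0 ≠ 0 ∧ p = (.X : A[X]) ^ k * q := by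
    obtain ⟨q, hq⟩ := X_pow_dvd_iff.2 fun n (hn : n < p.natTrailingDegree) ↦
      coeff_eq_zero_of_lt_natTrailingDegree hn
    refine ⟨_, q, ?_, hq⟩
    rw [← coeff_X_pow_mul q p.natTrailingDegree 0, ← hq, zero_add]
    exact trailingCoeff_nonzero_iff_nonzero.2 hp
  have hunit {n : ℕ} (hn : q.coeff n ≠ 0) : IsUnit (q.coeff n) := by
    rw [← coeff_X_pow_mul q k n] at hn ⊢
    exact (hcoeff _).resolve_left hn
  obtain ⟨u, hu⟩ : IsUnit q.leadingCoeff :=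
    hunit (leadingCoeff_ne_zero.2 (by rintro rfl; exact hq (Polynomial.coeff_zero 0)))
  have hmonic : (Polynomial.C u⁻¹.val * q).Monic :=
    monic_C_mul_of_mul_leadingCoeff_eq_one (hu ▸ u.inv_mul)
  have hC : Polynomial.C u.val * Polynomial.C u⁻¹.val = 1 := by
    rw [← map_mul, Units.mul_inv, map_one]
  refine ⟨u, k, Polynomial.C u⁻¹.val * q, hmonic, ?_, by linear_combination .X ^ k * q * hC⟩
  rw [Polynomial.coeff_C_mul]
  exact u⁻¹.isUnit.mul (hunit hq)

lemma isDoublyMonic_of_coeff {f : A[T;T⁻¹]} (hf : f ≠ 0)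
    (hcoeff : ∀ n, f.coeff n = 0 ∨ IsUnit (f.coeff n)) : IsDoublyMonic f := by
  obtain ⟨N, p, hp⟩ := f.exists_T_pow
  have hp₀ : p ≠ 0 := by
    rintro rfl
    exact hf ((isUnit_T (N : ℤ)).mul_left_eq_zero.1 (by simpa using hp.symm))
  have hshift (n : ℕ) : p.coeff n = f.coeff (n - N) := by
    rw [← coeff_toLaurent_natCast, hp]
    simpa [sub_eq_add_neg] using AddMonoidAlgebra.coeff_mul_single_apply f (1 : A) (N : ℤ) n
  obtain ⟨u, k, g, hg, hg₀, hgp⟩ :=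
    exists_monic_C_mul_X_pow_mul_eq hp₀ fun n ↦ hshift n ▸ hcoeff _
  refine ⟨g, hg, hg₀, ?_⟩
  have hu : IsUnit (toLaurent (.C u.val * .X ^ k)) := by
    rw [map_mul, toLaurent_X_pow]
    exact ((u.isUnit.map Polynomial.C).map toLaurent).mul (isUnit_T _)
  have hassoc : Associated (toLaurent g) (f * T N) := by
    rw [← hp, ← hgp, map_mul]
    exact associated_unit_mul_right _ _ hu
  exact hassoc.trans (associated_mul_unit_left f _ (isUnit_T _))

lemma isCoprime_X_pow_of_isUnit_coeff_zero {g : A[X]} (hg : IsUnit (g.coeff 0)) (n : ℕ) :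
    IsCoprime g (.X ^ n) := by
  obtain ⟨u, hu⟩ := hg.map Polynomial.C
  refine IsCoprime.pow_right ⟨u⁻¹.val, -u⁻¹.val * g.divX, ?_⟩
  have hdiv : .X * g.divX + u.val = g := hu ▸ X_mul_divX_add g
  linear_combination u.inv_mul - u⁻¹.val * hdiv

lemma toLaurent_dvd_toLaurent {g p : A[X]} (hg : IsUnit (g.coeff 0)) :
    toLaurent g ∣ toLaurent p ↔ g ∣ p := by
  refine ⟨fun ⟨w, hw⟩ ↦ ?_, map_dvd _⟩
  obtain ⟨n, q, hq⟩ := w.exists_T_pow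
  refine (isCoprime_X_pow_of_isUnit_coeff_zero hg n).dvd_of_dvd_mul_right ⟨q, ?_⟩
  apply toLaurent_injective
  rw [map_mul, map_mul, hw, hq, toLaurent_X_pow, mul_assoc]

lemma exists_toLaurent_dvd_sub {g : A[X]} (hg : IsUnit (g.coeff 0)) (f : A[T;T⁻¹]) :
    ∃ p : A[X], toLaurent g ∣ f - toLaurent p := by
  obtain ⟨n, q, hq⟩ := f.exists_T_pow
  obtain ⟨a, b, hab⟩ := isCoprime_X_pow_of_isUnit_coeff_zero hg n
  refine ⟨b * q, f * toLaurent a, ?_⟩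
  have hab' := congr_arg toLaurent hab
  simp only [map_add, map_mul, toLaurent_X_pow, map_one] at hab'
  rw [map_mul, hq]
  linear_combination -f * hab'

/-- Reduction modulo a doubly monic polynomial does not see the inversion of the variable. -/
noncomputable def quotientToLaurentEquiv {g : A[X]} (hg : IsUnit (g.coeff 0)) :
    (A[X] ⧸ Ideal.span {g}) ≃ₗ[A] A[T;T⁻¹] ⧸ Ideal.span {toLaurent g} := by
  refine .ofBijective (Ideal.quotientMapₐ (Ideal.span {toLaurent g}) toLaurentAlg
    (by simp [Ideal.span_le])).toLinearMap ⟨?_, ?_⟩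
  · rw [injective_iff_map_eq_zero]
    intro x hx
    obtain ⟨p, rfl⟩ := Ideal.Quotient.mk_surjective x
    change Ideal.Quotient.mk _ (toLaurent p) = 0 at hx
    rw [Ideal.Quotient.eq_zero_iff_dvd] at hx ⊢
    exact (toLaurent_dvd_toLaurent hg).1 hx
  · intro y
    obtain ⟨f, rfl⟩ := Ideal.Quotient.mk_surjective y
    obtain ⟨p, hp⟩ := exists_toLaurent_dvd_sub hg f
    exact ⟨Ideal.Quotient.mk _ p,
      (Ideal.Quotient.eq.2 (Ideal.mem_span_singleton.2 hp)).symm⟩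

variable {f : A[T;T⁻¹]}

lemma IsDoublyMonic.finite_quotient (hf : IsDoublyMonic f) :
    Module.Finite A (A[T;T⁻¹] ⧸ Ideal.span {f}) := by
  obtain ⟨g, hg, hg₀, u, rfl⟩ := hf
  have := hg.finite_quotient
  rw [Ideal.span_singleton_mul_right_unit u.isUnit]
  exact .equiv (quotientToLaurentEquiv hg₀)

lemma IsDoublyMonic.free_quotient (hf : IsDoublyMonic f) :
    Module.Free A (A[T;T⁻¹] ⧸ Ideal.span {f}) := by
  obtain ⟨g, hg, hg₀, u, rfl⟩ := hf
  have := hg.free_quotient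
  rw [Ideal.span_singleton_mul_right_unit u.isUnit]
  exact .of_equiv (quotientToLaurentEquiv hg₀)

/-- A power of `X` lies in the ideal spanned by `w`, because the ideal becomes trivial in
`A[T;T⁻¹]`, and it is coprime to the entry `w i`. -/
lemma span_range_eq_top_of_toLaurent {ι : Type*} {w : ι → A[X]} {i : ι}
    (hi : IsUnit ((w i).coeff 0)) (hw : Ideal.span (Set.range (toLaurent ∘ w)) = ⊤) :
    Ideal.span (Set.range w) = ⊤ := by
  set I := Ideal.span (Set.range w)
  have hI : I.map (algebraMap A[X] A[T;T⁻¹]) = ⊤ := by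
    rw [← hw, Set.range_comp, ← Ideal.map_span]
    rfl
  obtain ⟨_, ⟨n, rfl⟩, hn⟩ := Set.not_disjoint_iff.1 <|
    mt (IsLocalization.map_algebraMap_ne_top_iff_disjoint (.powers (.X : A[X])) A[T;T⁻¹] I).2
      (not_not.2 hI)
  have hwi : w i ∈ I := Ideal.subset_span (Set.mem_range_self i)
  obtain ⟨a, b, hab⟩ := isCoprime_X_pow_of_isUnit_coeff_zero hi n
  rw [Ideal.eq_top_iff_one, ← hab]
  exact I.add_mem (I.mul_mem_left a hwi) (I.mul_mem_left b hn)

variable {ι : Type*} [Fintype ι] [DecidableEq ι]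

lemma IsDoublyMonic.exists_glEquivalent_toLaurent {v : ι → A[T;T⁻¹]} {i : ι}
    (hi : IsDoublyMonic (v i)) : ∃ w : ι → A[X], (w i).Monic ∧ IsUnit ((w i).coeff 0) ∧
      GLEquivalent v (toLaurent ∘ w) := by
  obtain ⟨g, hg, hg₀, u, hu⟩ := hi
  choose p z hz using fun l ↦ exists_toLaurent_dvd_sub hg₀ (u⁻¹ • v l)
  refine ⟨Function.update p i g, by simpa, by simpa, (GLEquivalent.units_smul u⁻¹ v).trans ?_⟩
  have hvi : (u⁻¹ • v) i = toLaurent g := by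
    rw [Pi.smul_apply, ← hu, Units.smul_def, smul_eq_mul, mul_left_comm, Units.inv_mul, mul_one]
  convert GLEquivalent.add_dotProduct_smul (u⁻¹ • v) (Pi.single i 1)
    (-Function.update z i 0) (by simp) using 1
  ext1 l
  obtain rfl | hl := eq_or_ne l i
  · simp [hvi]
  · have hl' : toLaurent (p l) = (u⁻¹ • v) l - (u⁻¹ • v) i * z l := by
      rw [hvi, ← hz, Pi.smul_apply, sub_sub_cancel]
    simp [hl, hl', sub_eq_add_neg, smul_mul_assoc]

theorem IsDoublyMonic.glEquivalent_single {v : ι → A[T;T⁻¹]} {i : ι} (hi : IsDoublyMonic (v i))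
    (hv : Ideal.span (Set.range v) = ⊤) (k : ι) : GLEquivalent v (Pi.single k 1) := by
  suffices GLEquivalent v (Pi.single i 1) from this.trans (.single_single i k)
  by_cases! hij : ∃ j, i ≠ j
  · obtain ⟨j, hij⟩ := hij
    obtain ⟨w, hw, hw₀, hvw⟩ := hi.exists_glEquivalent_toLaurent
    have hspan : Ideal.span (Set.range w) = ⊤ :=
      span_range_eq_top_of_toLaurent hw₀ (hvw.span_range_eq ▸ hv)
    refine hvw.trans (((GLEquivalent.C_eval_zero hij hw hspan).map toLaurent).trans ?_)
    refine .single_of_isUnit ?_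
    rw [coeff_zero_eq_eval_zero] at hw₀
    exact (hw₀.map Polynomial.C).map toLaurent
  · refine .single_of_isUnit ?_
    let : Unique ι := ⟨⟨i⟩, fun j ↦ (hij j).symm⟩
    have hrange : Set.range v = {v i} := Set.range_unique
    rwa [hrange, Ideal.span_singleton_eq_top] at hv

end DoublyMonic

/-! ### Stably free modules over Hermite rings -/

section Hermite

variable {B : Type*} [CommRing B]

lemma exists_linearEquiv_fin_fun (M : Type*) [AddCommGroup M] [Module B M] [Module.Finite B M]
    [Module.Free B M] : ∃ n, Nonempty (M ≃ₗ[B] (Fin n → B)) :=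
  ⟨_, ⟨((Module.Free.chooseBasis B M).reindex (Fintype.equivFin _)).equivFun⟩⟩

variable (B) in
/-- A commutative ring is Hermite, in the sense of Lam, if every unimodular column is the first
column of an invertible matrix. -/
def IsHermite : Prop :=
  ∀ (n : ℕ) (v : Fin (n + 1) → B), Ideal.span (Set.range v) = ⊤ → GLEquivalent v (Pi.single 0 1)

lemma span_range_eq_top_of_apply_eq_one {ι : Type*} [Finite ι] {v : ι → B}
    (φ : (ι → B) →ₗ[B] B) (hφ : φ v = 1) : Ideal.span (Set.range v) = ⊤ := by
  classical
  have := Fintype.ofFinite ι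
  rw [Ideal.eq_top_iff_one, Ideal.mem_span_range_iff_exists_fun]
  refine ⟨fun i ↦ φ fun j ↦ if i = j then 1 else 0, ?_⟩
  rw [φ.pi_apply_eq_sum_univ v] at hφ
  simpa only [smul_eq_mul, mul_comm] using hφ

variable {P : Type*} [AddCommGroup P] [Module B P]

/-- Deleting the first coordinate identifies `P` with the quotient of `P × B` by `0 × B`. -/
lemma free_of_apply_zero_one_eq_single {n : ℕ} (e : (P × B) ≃ₗ[B] (Fin (n + 1) → B))
    (he : e (0, 1) = Pi.single 0 1) : Module.Free B P := by
  have he' (c : B) : e (0, c) = Fin.cons c 0 := by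
    have h : ((0, c) : P × B) = c • (0, 1) := by simp
    rw [h, map_smul, he]
    ext j
    cases j using Fin.cases <;> simp
  let tail : (Fin (n + 1) → B) →ₗ[B] (Fin n → B) := .funLeft B B Fin.succ
  refine .of_equiv (LinearEquiv.ofBijective (tail ∘ₗ e.toLinearMap ∘ₗ .inl B P B) ⟨?_, ?_⟩).symm
  · rw [injective_iff_map_eq_zero]
    intro x hx
    have h : e (x, 0) = e (0, e (x, 0) 0) := by
      rw [he', ← Fin.cons_self_tail (e (x, 0))]
      exact congrArg (Fin.cons _) hx
    exact congrArg Prod.fst (e.injective h)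
  · intro y
    obtain ⟨⟨x, c⟩, hxc⟩ := e.surjective (Fin.cons 0 y)
    refine ⟨x, ?_⟩
    have h : e (x, 0) = Fin.cons 0 y - Fin.cons c 0 := by
      rw [← hxc, ← he', ← map_sub]
      simp
    simp only [LinearMap.comp_apply, LinearMap.inl_apply, LinearEquiv.coe_coe, h]
    ext j
    simp [tail, LinearMap.funLeft_apply]

variable (P) in
lemma IsHermite.free_of_free_prod (hB : IsHermite B) [Module.Finite B P] [Module.Free B (P × B)] :
    Module.Free B P := by
  obtain ⟨n, ⟨e⟩⟩ := exists_linearEquiv_fin_fun (B := B) (P × B)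
  cases n with
  | zero =>
    have : Subsingleton (P × B) := e.injective.subsingleton
    have : Subsingleton P := (LinearMap.inl_injective (R := B) (M₂ := B)).subsingleton
    infer_instance
  | succ n =>
    have hunimodular := span_range_eq_top_of_apply_eq_one (v := e (0, 1))
      (.snd B P B ∘ₗ e.symm.toLinearMap) (by simp)
    obtain ⟨M, hM⟩ := hB n _ hunimodular
    let f : (Fin (n + 1) → B) ≃ₗ[B] (Fin (n + 1) → B) :=
      LinearMap.GeneralLinearGroup.generalLinearEquiv B _ (Matrix.GeneralLinearGroup.toLin M)
    exact free_of_apply_zero_one_eq_single (e ≪≫ₗ f) hM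

variable (P) in
lemma IsHermite.free_of_free_prod_fin_fun (hB : IsHermite B) [Module.Finite B P] (s : ℕ)
    (hfree : Module.Free B (P × (Fin s → B))) : Module.Free B P := by
  induction s with
  | zero => exact .of_equiv (LinearEquiv.prodUnique : (P × (Fin 0 → B)) ≃ₗ[B] P)
  | succ s ih =>
    let e : (P × (Fin (s + 1) → B)) ≃ₗ[B] (P × (Fin s → B)) × B :=
      (LinearEquiv.refl B P).prodCongr
        ((Fin.consLinearEquiv B fun _ ↦ B).symm ≪≫ₗ .prodComm B _ _) ≪≫ₗ
          (LinearEquiv.prodAssoc B P (Fin s → B) B).symm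
    have := Module.Free.of_equiv e
    exact ih (hB.free_of_free_prod _)

variable (P) in
theorem IsHermite.free_of_isStablyFree (hB : IsHermite B) [Module.Finite B P]
    [Module.IsStablyFree B P] : Module.Free B P := by
  obtain ⟨N, _, _, _, _, _⟩ := Module.IsStablyFree.exist_free_prod B P
  obtain ⟨s, ⟨e⟩⟩ := exists_linearEquiv_fin_fun (B := B) N
  exact hB.free_of_free_prod_fin_fun P s (.of_equiv ((LinearEquiv.refl B P).prodCongr e))

end Hermite

/-! ### Rings over which projective modules are free -/

section ProjectivesFree

universe u v

/-- Every finitely generated projective module is free. Testing modules in the universe of the ring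
suffices, see `ProjectivesFree.free`. -/
def ProjectivesFree (B : Type u) [CommRing B] : Prop :=
  ∀ (P : Type u) [AddCommGroup P] [Module B P] [Module.Finite B P] [Module.Projective B P],
    Module.Free B P

lemma ProjectivesFree.free {B : Type u} [CommRing B] (hB : ProjectivesFree B) (P : Type v)
    [AddCommGroup P] [Module B P] [Module.Finite B P] [Module.Projective B P] :
    Module.Free B P := by
  have : Small.{u} P := Module.Finite.small.{u} B P
  let e : Shrink.{u} P ≃ₗ[B] P := Shrink.linearEquiv B P
  have : Module.Finite B (Shrink.{u} P) := .equiv e.symm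
  have : Module.Projective B (Shrink.{u} P) := .of_equiv e.symm
  have := hB (Shrink.{u} P)
  exact .of_equiv e

lemma ProjectivesFree.of_ringEquiv {B : Type u} {C : Type v} [CommRing B] [CommRing C]
    (e : B ≃+* C) (hB : ProjectivesFree B) : ProjectivesFree C := by
  intro P _ _ _ _
  let : Module B P := .compHom P e.toRingHom
  have := RingHomInvPair.of_ringEquiv e
  have := RingHomInvPair.of_ringEquiv_symm e
  let f : P ≃ₛₗ[(e : B →+* C)] P := { AddEquiv.refl P with map_smul' := fun _ _ ↦ rfl }
  have : Module.Finite B P := .of_surjective f.symm.toLinearMap f.symm.surjective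
  have : Module.Projective B P := .of_equiv f.symm
  have := hB.free P
  exact .of_equiv f

end ProjectivesFree

/-! ### Clearing denominators -/

section ClearDenominators

open scoped TensorProduct nonZeroDivisors

lemma exists_comp_eq_smul_id {B : Type*} [CommRing B] (S : Submonoid B) (hS : S ≤ B⁰)
    {L : Type*} [CommRing L] [Algebra B L] [IsLocalization S L] (hL : ProjectivesFree L)
    (P : Type*) [AddCommGroup P] [Module B P] [Module.Finite B P] [Module.Projective B P] :
    ∃ (r : ℕ) (f : (Fin r → B) →ₗ[B] P) (φ : P →ₗ[B] Fin r → B), ∃ s ∈ S,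
      f ∘ₗ φ = s • .id ∧ φ ∘ₗ f = s • .id := by
  have := hL.free (L ⊗[B] P)
  obtain ⟨r, ⟨eL⟩⟩ := exists_linearEquiv_fin_fun (B := L) (L ⊗[B] P)
  let e : L ⊗[B] P ≃ₗ[B] (Fin r → L) := eL.restrictScalars B
  have := Module.finitePresentation_of_projective B P
  let ι : P →ₗ[B] L ⊗[B] P := TensorProduct.mk B L P 1
  let κ : (Fin r → B) →ₗ[B] (Fin r → L) := .pi fun i ↦ Algebra.linearMap B L ∘ₗ .proj i
  have hι : Function.Injective ι := (IsLocalizedModule.injective_iff_isRegular S ι).2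
    fun s ↦ Module.Flat.isSMulRegular_of_nonZeroDivisors (hS s.2)
  have hκ : Function.Injective κ := (IsLocalizedModule.injective_iff_isRegular S κ).2
    fun s ↦ Module.Flat.isSMulRegular_of_nonZeroDivisors (hS s.2)
  obtain ⟨φ, s, hφ⟩ := Module.FinitePresentation.exists_lift_of_isLocalizedModule S κ
    (e.toLinearMap ∘ₗ ι)
  obtain ⟨f, t, hf⟩ := Module.FinitePresentation.exists_lift_of_isLocalizedModule S ι
    (e.symm.toLinearMap ∘ₗ κ)
  replace hφ (x : P) : κ (φ x) = (s : B) • e (ι x) := LinearMap.congr_fun hφ x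
  replace hf (y : Fin r → B) : ι (f y) = (t : B) • e.symm (κ y) := LinearMap.congr_fun hf y
  refine ⟨r, f, φ, s * t, S.mul_mem s.2 t.2, LinearMap.ext fun x ↦ hι ?_,
    LinearMap.ext fun y ↦ hκ ?_⟩
  · calc ι (f (φ x)) = (t : B) • e.symm ((s : B) • e (ι x)) := by rw [hf, hφ]
      _ = ι ((s * t : B) • x) := by
        rw [map_smul, e.symm_apply_apply, smul_smul, mul_comm, map_smul]
  · calc κ (φ (f y)) = (s : B) • e ((t : B) • e.symm (κ y)) := by rw [hφ, hf]
      _ = κ ((s * t : B) • y) := by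
        rw [map_smul, e.apply_symm_apply, smul_smul, map_smul]

end ClearDenominators

/-! ### Schanuel's lemma and the characteristic sequence -/

section Schanuel

variable {R M N W : Type*} [Ring R] [AddCommGroup M] [AddCommGroup N] [AddCommGroup W] [Module R M]
  [Module R N] [Module R W]

/-- If `σ` lifts `g` along `h`, the shear `(x, y) ↦ (x, y - σ x)` carries the pullback of `g` and
`h` to `M × ker h`. -/
def pullbackEquivProdKer (g : M →ₗ[R] W) (h : N →ₗ[R] W) (σ : M →ₗ[R] N) (hσ : h ∘ₗ σ = g) :
    LinearMap.eqLocus (g ∘ₗ .fst R M N) (h ∘ₗ .snd R M N) ≃ₗ[R] M × LinearMap.ker h where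
  toFun z := (z.1.1, ⟨z.1.2 - σ z.1.1, by
    have hz : g z.1.1 = h z.1.2 := z.2
    have hσz : h (σ z.1.1) = g z.1.1 := LinearMap.congr_fun hσ _
    rw [LinearMap.mem_ker, map_sub, hσz, hz, sub_self]⟩)
  invFun z := ⟨(z.1, z.2 + σ z.1), by
    have hσz : h (σ z.1) = g z.1 := LinearMap.congr_fun hσ _
    simp [hσz]⟩
  map_add' z z' := by
    ext <;> simp [add_sub_add_comm]
  map_smul' c z := by
    ext <;> simp [smul_sub]
  left_inv z := by simp
  right_inv z := by simp

theorem nonempty_prod_ker_equiv_prod_ker [Module.Projective R M] [Module.Projective R N]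
    {g : M →ₗ[R] W} {h : N →ₗ[R] W} (hg : Function.Surjective g) (hh : Function.Surjective h) :
    Nonempty ((M × LinearMap.ker h) ≃ₗ[R] N × LinearMap.ker g) := by
  obtain ⟨σ, hσ⟩ := Module.projective_lifting_property h g hh
  obtain ⟨τ, hτ⟩ := Module.projective_lifting_property g h hg
  let swap : LinearMap.eqLocus (g ∘ₗ .fst R M N) (h ∘ₗ .snd R M N) ≃ₗ[R]
      LinearMap.eqLocus (h ∘ₗ .fst R N M) (g ∘ₗ .snd R N M) :=
    (LinearEquiv.prodComm R M N).ofSubmodules _ _ (by ext; simp [eq_comm])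
  exact ⟨(pullbackEquivProdKer g h σ hσ).symm ≪≫ₗ swap ≪≫ₗ pullbackEquivProdKer h g τ hτ⟩

end Schanuel

section CharacteristicSequence

open LaurentPolynomial
open scoped TensorProduct

variable (A : Type*) [CommRing A] (W : Type*) [AddCommGroup W] [Module A W]

/-- The decomposition `A[T;T⁻¹] ⊗ W = ⨁ n, T n ⊗ W`. -/
noncomputable def tensorEquivFinsupp : A[T;T⁻¹] ⊗[A] W ≃ₗ[A] (ℤ →₀ W) :=
  (AddMonoidAlgebra.coeffLinearEquiv A).rTensor W ≪≫ₗ TensorProduct.finsuppScalarLeft A W ℤ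

lemma tensorEquivFinsupp_tmul_apply (f : A[T;T⁻¹]) (w : W) (n : ℤ) :
    tensorEquivFinsupp A W (f ⊗ₜ w) n = f.coeff n • w := by
  simp [tensorEquivFinsupp]

variable [Module A[T;T⁻¹] W] [IsScalarTower A A[T;T⁻¹] W]

/-- The map `T ⊗ 1 - 1 ⊗ T` on `A[T;T⁻¹] ⊗ W`, whose cokernel is `W`. When `W` is free its
determinant is the characteristic polynomial of `T` acting on `W`. -/
noncomputable def characteristicMap : A[T;T⁻¹] ⊗[A] W →ₗ[A[T;T⁻¹]] A[T;T⁻¹] ⊗[A] W :=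
  (T 1 : A[T;T⁻¹]) • .id -
    ((LinearMap.lsmul A[T;T⁻¹] W (T 1)).restrictScalars A).baseChange A[T;T⁻¹]

lemma characteristicMap_tmul (f : A[T;T⁻¹]) (w : W) :
    characteristicMap A W (f ⊗ₜ w) =
      (T 1 * f) ⊗ₜ[A] w - f ⊗ₜ[A] ((T 1 : A[T;T⁻¹]) • w) := rfl

/-- The multiplication map `f ⊗ w ↦ f • w`. -/
noncomputable def scalarMap : A[T;T⁻¹] ⊗[A] W →ₗ[A[T;T⁻¹]] W :=
  LinearMap.liftBaseChange A[T;T⁻¹] (.id : W →ₗ[A] W)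

lemma scalarMap_tmul (f : A[T;T⁻¹]) (w : W) : scalarMap A W (f ⊗ₜ w) = f • w := rfl

lemma scalarMap_surjective : Function.Surjective (scalarMap A W) :=
  fun w ↦ ⟨1 ⊗ₜ w, one_smul _ w⟩

lemma tensorEquivFinsupp_characteristicMap_apply (u : A[T;T⁻¹] ⊗[A] W) (n : ℤ) :
    tensorEquivFinsupp A W (characteristicMap A W u) n =
      tensorEquivFinsupp A W u (n - 1) - (T 1 : A[T;T⁻¹]) • tensorEquivFinsupp A W u n := by
  induction u with
  | zero => simp
  | add u v hu hv => simp only [map_add, Finsupp.add_apply, hu, hv, smul_add]; abel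
  | tmul f w =>
    have hT : (T 1 * f).coeff n = f.coeff (n - 1) := by
      simpa [sub_eq_neg_add] using AddMonoidAlgebra.coeff_single_mul_apply f (1 : A) (1 : ℤ) n
    rw [characteristicMap_tmul, map_sub, Finsupp.sub_apply]
    simp only [tensorEquivFinsupp_tmul_apply, hT, smul_comm (f.coeff n)]

lemma characteristicMap_injective : Function.Injective (characteristicMap A W) := by
  refine (injective_iff_map_eq_zero _).2 fun u hu ↦ ?_
  set F := tensorEquivFinsupp A W u
  have hrec (n : ℤ) : F (n - 1) = (T 1 : A[T;T⁻¹]) • F n := by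
    have h := tensorEquivFinsupp_characteristicMap_apply A W u n
    rwa [hu, map_zero, Finsupp.zero_apply, eq_comm, sub_eq_zero] at h
  suffices h : F = 0 from (LinearEquiv.map_eq_zero_iff _).1 h
  by_contra h
  have hne : F.support.Nonempty := Finsupp.support_nonempty_iff.2 h
  have htop : F (F.support.max' hne + 1) = 0 :=
    Finsupp.notMem_support_iff.1 fun hmem ↦ (lt_add_one _).not_ge (F.support.le_max' _ hmem)
  refine Finsupp.mem_support_iff.1 (F.support.max'_mem hne) ?_
  simpa [htop] using hrec (F.support.max' hne + 1)

lemma tmul_sub_one_tmul_smul_mem_range (f : A[T;T⁻¹]) (w : W) :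
    f ⊗ₜ[A] w - 1 ⊗ₜ[A] (f • w) ∈ LinearMap.range (characteristicMap A W) := by
  have hstep (n : ℤ) (w : W) : T (n + 1) ⊗ₜ[A] w - T n ⊗ₜ[A] ((T 1 : A[T;T⁻¹]) • w) ∈
      LinearMap.range (characteristicMap A W) :=
    ⟨T n ⊗ₜ w, by rw [characteristicMap_tmul, ← T_add, add_comm]⟩
  have hT (n : ℤ) (w : W) : (T n : A[T;T⁻¹]) ⊗ₜ[A] w - 1 ⊗ₜ[A] ((T n : A[T;T⁻¹]) • w) ∈
      LinearMap.range (characteristicMap A W) := by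
    induction n generalizing w with
    | zero => simp
    | succ n ih =>
      have h := add_mem (hstep n w) (ih ((T 1 : A[T;T⁻¹]) • w))
      rwa [sub_add_sub_cancel, smul_smul, ← T_add] at h
    | pred n ih =>
      have h := sub_mem (ih ((T (-1) : A[T;T⁻¹]) • w)) (hstep (-n - 1) ((T (-1) : A[T;T⁻¹]) • w))
      rw [sub_add_cancel, sub_sub_sub_cancel_left, smul_smul, smul_smul, ← T_add, ← T_add] at h
      simpa [sub_eq_add_neg] using h
  induction f using LaurentPolynomial.induction_on' with
  | add f g hf hg =>
    rw [TensorProduct.add_tmul, add_smul, TensorProduct.tmul_add, add_sub_add_comm]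
    exact add_mem hf hg
  | C_mul_T n a =>
    have h := hT n (a • w)
    rwa [← TensorProduct.smul_tmul, LaurentPolynomial.smul_eq_C_mul, smul_comm, ← smul_assoc,
      LaurentPolynomial.smul_eq_C_mul] at h

lemma ker_scalarMap : LinearMap.ker (scalarMap A W) = LinearMap.range (characteristicMap A W) := by
  refine le_antisymm (fun z hz ↦ ?_) ?_
  · have hsub : z - 1 ⊗ₜ[A] scalarMap A W z ∈ LinearMap.range (characteristicMap A W) := by
      clear hz
      induction z with
      | zero => simp
      | add x y hx hy =>
        rw [map_add, TensorProduct.tmul_add, add_sub_add_comm]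
        exact add_mem hx hy
      | tmul f w => exact tmul_sub_one_tmul_smul_mem_range A W f w
    rwa [LinearMap.mem_ker.1 hz, TensorProduct.tmul_zero, sub_zero] at hsub
  · rintro _ ⟨u, rfl⟩
    rw [LinearMap.mem_ker]
    induction u with
    | zero => simp
    | add x y hx hy => simp [hx, hy]
    | tmul f w =>
      rw [characteristicMap_tmul, map_sub, scalarMap_tmul, scalarMap_tmul, smul_smul, mul_comm,
        sub_self]

end CharacteristicSequence

/-! ### Stable freeness -/

section StablyFree

open Polynomial LaurentPolynomial
open scoped TensorProduct nonZeroDivisors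

section Quotient

variable {A B P : Type*} [CommRing A] [CommRing B] [Algebra A B] [AddCommGroup P] [Module A P]
  [Module B P] [IsScalarTower A B P] {s : B}

variable (B) in
lemma projective_of_isScalarTower [Module.Projective A B] [Module.Projective B P] :
    Module.Projective A P := by
  obtain ⟨σ, hσ⟩ := Module.projective_def'.1 ‹Module.Projective B P›
  have : Module.Projective A (P →₀ B) := by
    classical exact .of_equiv (finsuppLequivDFinsupp A).symm
  exact .of_split (σ.restrictScalars A) ((Finsupp.linearCombination B id).restrictScalars A)
    (LinearMap.ext fun x ↦ LinearMap.congr_fun hσ x)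

lemma exists_linearMap_mul_left_eq_self (hs : s ∈ B⁰) [Module.Projective A (B ⧸ Ideal.span {s})] :
    ∃ ρ : B →ₗ[A] B, ∀ b, ρ (s * b) = b := by
  let mulS : B →ₗ[A] B := LinearMap.mulLeft A s
  let π : B →ₗ[A] B ⧸ Ideal.span {s} := (Ideal.Quotient.mkₐ A _).toLinearMap
  have hexact : Function.Exact mulS π := fun b ↦ by
    simp [mulS, π, Ideal.Quotient.eq_zero_iff_mem, Ideal.mem_span_singleton', mul_comm]
  have hinj : Function.Injective mulS := fun b c h ↦ (mul_cancel_left_mem_nonZeroDivisors hs).1 h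
  obtain ⟨l, hl⟩ := Module.projective_lifting_property π .id Ideal.Quotient.mk_surjective
  obtain ⟨-, ρ, hρ⟩ := (hexact.split_tfae'.out 0 1 rfl rfl).1 ⟨hinj, l, hl⟩
  exact ⟨ρ, LinearMap.congr_fun hρ⟩

lemma projective_quotient_range [Module.Projective A P] (hs : s ∈ B⁰)
    [Module.Projective A (B ⧸ Ideal.span {s})] {ι : Type*} {f : (ι → B) →ₗ[B] P}
    {φ : P →ₗ[B] ι → B} (hφf : φ ∘ₗ f = s • .id) :
    Module.Projective A (P ⧸ LinearMap.range f) := by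
  obtain ⟨ρ, hρ⟩ := exists_linearMap_mul_left_eq_self (A := A) hs
  let retraction : P →ₗ[A] ι → B := .pi fun i ↦ ρ ∘ₗ .proj i ∘ₗ φ.restrictScalars A
  have hretraction : retraction ∘ₗ f.restrictScalars A = .id := by
    ext1 y
    ext1 i
    have hy : φ (f y) = s • y := LinearMap.congr_fun hφf y
    simp [retraction, hy, hρ]
  let π : P →ₗ[A] P ⧸ LinearMap.range f := (LinearMap.range f).mkQ.restrictScalars A
  have hexact : Function.Exact (f.restrictScalars A) π := LinearMap.exact_map_mkQ_range f
  obtain ⟨-, l, hl⟩ := (hexact.split_tfae'.out 1 0 rfl rfl).1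
    ⟨(LinearMap.range f).mkQ_surjective, retraction, hretraction⟩
  exact .of_split l π hl

lemma finite_of_smul_eq_zero [Module.Finite A (B ⧸ Ideal.span {s})] [Module.Finite B P]
    (hs : ∀ x : P, s • x = 0) : Module.Finite A P := by
  have htors : Module.IsTorsionBySet B P (Ideal.span {s} : Ideal B) :=
    (Module.isTorsionBySet_span_singleton_iff s).2 hs
  let := htors.module
  have : IsScalarTower B (B ⧸ Ideal.span {s}) P := htors.isScalarTower
  have : IsScalarTower A (B ⧸ Ideal.span {s}) P := htors.isScalarTower
  have : Module.Finite (B ⧸ Ideal.span {s}) P := .of_restrictScalars_finite B _ P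
  exact .trans (B ⧸ Ideal.span {s}) P

end Quotient

variable {A : Type*} [CommRing A]

lemma isStablyFree_of_surjective {P W : Type*} [AddCommGroup P] [Module A[T;T⁻¹] P]
    [Module.Projective A[T;T⁻¹] P] [AddCommGroup W] [Module A W] [Module A[T;T⁻¹] W]
    [IsScalarTower A A[T;T⁻¹] W] [Module.Finite A W] [Module.Free A W] {g : P →ₗ[A[T;T⁻¹]] W}
    (hg : Function.Surjective g) [Module.Free A[T;T⁻¹] (LinearMap.ker g)] :
    Module.IsStablyFree A[T;T⁻¹] P := by
  obtain ⟨e⟩ := nonempty_prod_ker_equiv_prod_ker hg (scalarMap_surjective A W)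
  let eker : A[T;T⁻¹] ⊗[A] W ≃ₗ[A[T;T⁻¹]] LinearMap.ker (scalarMap A W) :=
    .ofInjective _ (characteristicMap_injective A W) ≪≫ₗ .ofEq _ _ (ker_scalarMap A W).symm
  have : Module.Free A[T;T⁻¹] (LinearMap.ker (scalarMap A W)) := .of_equiv eker
  have : Module.Finite A[T;T⁻¹] (LinearMap.ker (scalarMap A W)) :=
    .equiv eker
  have : Module.Free A[T;T⁻¹] (P × LinearMap.ker (scalarMap A W)) := .of_equiv e.symm
  exact .of_free_prod _ _ (LinearMap.ker (scalarMap A W))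

lemma IsDoublyMonic.mem_nonZeroDivisors {f : A[T;T⁻¹]} (hf : IsDoublyMonic f) :
    f ∈ A[T;T⁻¹]⁰ := by
  obtain ⟨g, hg, -, u, rfl⟩ := hf
  exact mul_mem (IsLocalization.map_nonZeroDivisors_le (.powers (.X : A[X])) _
    ⟨g, hg.mem_nonZeroDivisors, rfl⟩) u.isUnit.mem_nonZeroDivisors

theorem IsDoublyMonic.isStablyFree {s : A[T;T⁻¹]} (hs : IsDoublyMonic s) (hA : ProjectivesFree A)
    {P : Type*} [AddCommGroup P] [Module A[T;T⁻¹] P] [Module.Finite A[T;T⁻¹] P]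
    [Module.Projective A[T;T⁻¹] P] {r : ℕ} {f : (Fin r → A[T;T⁻¹]) →ₗ[A[T;T⁻¹]] P}
    {φ : P →ₗ[A[T;T⁻¹]] Fin r → A[T;T⁻¹]} (hfφ : f ∘ₗ φ = s • .id) (hφf : φ ∘ₗ f = s • .id) :
    Module.IsStablyFree A[T;T⁻¹] P := by
  let : Module A P := .compHom P (algebraMap A A[T;T⁻¹])
  have : IsScalarTower A A[T;T⁻¹] P := .of_algebraMap_smul fun _ _ ↦ rfl
  have := hs.finite_quotient
  have := hs.free_quotient
  have : Module.Projective A P := projective_of_isScalarTower A[T;T⁻¹]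
  let W := P ⧸ LinearMap.range f
  have : Module.Projective A W := projective_quotient_range hs.mem_nonZeroDivisors hφf
  have hW (w : W) : s • w = 0 := by
    obtain ⟨x, rfl⟩ := (LinearMap.range f).mkQ_surjective w
    rw [← map_smul, Submodule.mkQ_apply, Submodule.Quotient.mk_eq_zero]
    exact ⟨φ x, LinearMap.congr_fun hfφ x⟩
  have : Module.Finite A W := finite_of_smul_eq_zero hW
  have := hA.free W
  have hf : Function.Injective f := by
    refine (injective_iff_map_eq_zero f).2 fun y hy ↦ funext fun i ↦ ?_
    have hsy : s • y = 0 := by simpa [hy] using (LinearMap.congr_fun hφf y).symm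
    exact (mul_left_mem_nonZeroDivisors_eq_zero_iff hs.mem_nonZeroDivisors).1 (congrFun hsy i)
  have : Module.Free A[T;T⁻¹] (LinearMap.ker (LinearMap.range f).mkQ) :=
    .of_equiv (.ofInjective f hf ≪≫ₗ .ofEq _ _ (Submodule.ker_mkQ _).symm)
  exact isStablyFree_of_surjective (W := W) (LinearMap.range f).mkQ_surjective

end StablyFree

/-! ### Laurent polynomial rings over a field are Hermite -/

section Shear

open scoped LaurentPolynomial

lemma exists_injOn_add_apply {ι : Type*} [Finite ι] (S : Finset (ℤ × (ι → ℤ))) :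
    ∃ h : (ι → ℤ) →+ ℤ, Set.InjOn (fun x ↦ x.1 + h x.2) (S : Set (ℤ × (ι → ℤ))) := by
  classical
  have := Fintype.ofFinite ι
  let linear (x : ℤ × (ι → ℤ)) : MvPolynomial ι ℤ := C x.1 + ∑ i, C (x.2 i) * X i
  have eval_linear (w : ι → ℤ) (x) : eval w (linear x) = x.1 + w ⬝ᵥ x.2 := by
    simp [linear, dotProduct, mul_comm]
  have linear_ne_zero {x} (hx : x ≠ 0) : linear x ≠ 0 := by
    contrapose! hx
    replace hx (w : ι → ℤ) : x.1 + w ⬝ᵥ x.2 = 0 := by rw [← eval_linear, hx, map_zero]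
    have hx₁ : x.1 = 0 := by simpa using hx 0
    exact Prod.ext hx₁ (funext fun i ↦ by simpa [hx₁] using hx (Pi.single i 1))
  have hprod : ∏ xy ∈ S.offDiag, linear (xy.1 - xy.2) ≠ 0 :=
    Finset.prod_ne_zero_iff.2 fun xy hxy ↦
      linear_ne_zero (sub_ne_zero.2 (Finset.mem_offDiag.1 hxy).2.2)
  obtain ⟨w, hw⟩ : ∃ w, eval w (∏ xy ∈ S.offDiag, linear (xy.1 - xy.2)) ≠ 0 := by
    contrapose! hprod
    exact MvPolynomial.funext fun w ↦ by rw [hprod, map_zero]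
  refine ⟨(dotProductEquiv ℤ ι w).toAddMonoidHom, fun x hx y hy hxy ↦ ?_⟩
  by_contra hne
  rw [map_prod, Finset.prod_ne_zero_iff] at hw
  refine hw (x, y) (Finset.mem_offDiag.2 ⟨hx, hy, hne⟩) ?_
  rw [eval_linear, Prod.fst_sub, Prod.snd_sub, dotProduct_sub, sub_add_sub_comm]
  exact sub_eq_zero.2 hxy

/-- The shear `(m, g) ↦ (m + h g, g)`, which acts on Laurent polynomials as a change of
coordinates. -/
def shearEquiv {M G : Type*} [AddCommGroup M] [AddCommGroup G] (h : G →+ M) : M × G ≃+ M × G where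
  toFun x := (x.1 + h x.2, x.2)
  invFun x := (x.1 - h x.2, x.2)
  left_inv x := by simp
  right_inv x := by simp
  map_add' x y := by ext <;> simp [add_add_add_comm]

lemma eq_zero_or_isUnit_of_support_subsingleton {k G : Type*} [Field k] [AddCommGroup G]
    {a : AddMonoidAlgebra k G} (ha : (a.coeff.support : Set G).Subsingleton) :
    a = 0 ∨ IsUnit a := by
  obtain ⟨g, c, hc⟩ := Finsupp.card_support_le_one'.1 (Finset.card_le_one_iff_subsingleton.2 ha)
  obtain rfl : a = .single g c := AddMonoidAlgebra.ext hc
  obtain rfl | hc₀ := eq_or_ne c 0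
  · exact .inl (AddMonoidAlgebra.single_zero g)
  · refine .inr (.of_mul_eq_one (AddMonoidAlgebra.single (-g) c⁻¹) ?_)
    rw [AddMonoidAlgebra.single_mul_single, add_neg_cancel, mul_inv_cancel₀ hc₀]
    rfl

variable {k : Type*} [Field k] {ι : Type*} [Finite ι]

/-- A generic shear makes the monomials of `f` have pairwise distinct exponents in `T`. -/
lemma exists_ringEquiv_isDoublyMonic {f : (AddMonoidAlgebra k (ι → ℤ))[T;T⁻¹]} (hf : f ≠ 0) :
    ∃ ψ : (AddMonoidAlgebra k (ι → ℤ))[T;T⁻¹] ≃+* (AddMonoidAlgebra k (ι → ℤ))[T;T⁻¹],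
      IsDoublyMonic (ψ f) := by
  let curry : AddMonoidAlgebra k (ℤ × (ι → ℤ)) ≃+* (AddMonoidAlgebra k (ι → ℤ))[T;T⁻¹] :=
    AddMonoidAlgebra.curryRingEquiv
  obtain ⟨h, hh⟩ := exists_injOn_add_apply (curry.symm f).coeff.support
  let ψ := (curry.symm.trans (AddMonoidAlgebra.mapDomainRingEquiv k (shearEquiv h))).trans curry
  have hψ (m : ℤ) (g : ι → ℤ) :
      ((ψ f).coeff m).coeff g = (curry.symm f).coeff (m - h g, g) := by
    change (AddMonoidAlgebra.mapDomainRingEquiv k (shearEquiv h) (curry.symm f)).coeff (m, g) = _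
    rw [AddMonoidAlgebra.coeff_mapDomainRingEquiv]
    rfl
  refine ⟨ψ, isDoublyMonic_of_coeff ((map_ne_zero_iff ψ ψ.injective).2 hf) fun m ↦
    eq_zero_or_isUnit_of_support_subsingleton fun g hg g' hg' ↦ ?_⟩
  simp only [Finset.mem_coe, Finsupp.mem_support_iff, hψ] at hg hg'
  refine congrArg Prod.snd (hh (Finsupp.mem_support_iff.2 hg) (Finsupp.mem_support_iff.2 hg') ?_)
  simp only [sub_add_cancel]

theorem isHermite_laurentPolynomial_addMonoidAlgebra :
    IsHermite (AddMonoidAlgebra k (ι → ℤ))[T;T⁻¹] := by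
  intro n v hv
  obtain ⟨i, hi⟩ : ∃ i, v i ≠ 0 := by
    by_contra! h
    have hbot : Ideal.span (Set.range v) = ⊥ := Ideal.span_eq_bot.2 (by simpa using h)
    exact bot_ne_top (hbot.symm.trans hv)
  obtain ⟨ψ, hψ⟩ := exists_ringEquiv_isDoublyMonic hi
  have hψv : Ideal.span (Set.range (ψ ∘ v)) = ⊤ := by
    rw [Set.range_comp, ← Ideal.map_span, hv, Ideal.map_top]
  convert (IsDoublyMonic.glEquivalent_single (v := ψ ∘ v) hψ hψv 0).map ψ.symm using 1
  · exact funext fun i ↦ (ψ.symm_apply_apply _).symm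
  · exact funext fun i ↦ by simp [Pi.single_apply, apply_ite ψ.symm]

end Shear

/-! ### Induction on the number of variables -/

section Induction

open scoped LaurentPolynomial nonZeroDivisors AlgebraMonoidAlgebra

universe u

lemma isLocalization_addMonoidAlgebra {R : Type*} [CommRing R] (S : Submonoid R) (L : Type*)
    [CommRing L] [Algebra R L] [IsLocalization S L] (M : Type*) [AddCommMonoid M] :
    IsLocalization (Algebra.algebraMapSubmonoid (AddMonoidAlgebra R M) S)
      (AddMonoidAlgebra L M) :=
  (Algebra.isLocalization_iff_isPushout S L).2 inferInstance

lemma coeff_commRingEquiv {R M N : Type*} [Semiring R] [AddMonoid M] [AddMonoid N]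
    (f : AddMonoidAlgebra (AddMonoidAlgebra R M) N) (m : M) (n : N) :
    ((AddMonoidAlgebra.commRingEquiv f).coeff m).coeff n = (f.coeff n).coeff m := by
  change (AddMonoidAlgebra.mapDomainRingEquiv R AddEquiv.prodComm
    (AddMonoidAlgebra.curryRingEquiv.symm f)).coeff (m, n) = _
  rw [AddMonoidAlgebra.coeff_mapDomainRingEquiv]
  rfl

variable {k : Type*} [Field k] {G : Type*} [AddCommGroup G]

lemma isDoublyMonic_commRingEquiv_single_zero {f : k[T;T⁻¹]} (hf : f ≠ 0) :
    IsDoublyMonic (AddMonoidAlgebra.commRingEquiv (.single (0 : G) f)) := by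
  refine isDoublyMonic_of_coeff ?_ fun n ↦ eq_zero_or_isUnit_of_support_subsingleton ?_
  · rw [map_ne_zero_iff _ AddMonoidAlgebra.commRingEquiv.injective]
    exact AddMonoidAlgebra.single_ne_zero.2 hf
  · refine (Set.subsingleton_singleton (a := 0)).anti fun g hg ↦ ?_
    by_contra hg₀
    simp [coeff_commRingEquiv, Finsupp.single_eq_of_ne hg₀] at hg

theorem exists_isDoublyMonic_comp_eq_smul_id {K : Type*} [Field K] [Algebra k[T;T⁻¹] K]
    [IsFractionRing k[T;T⁻¹] K] (hK : ProjectivesFree (AddMonoidAlgebra K G)) (P : Type*)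
    [AddCommGroup P] [Module (AddMonoidAlgebra k G)[T;T⁻¹] P]
    [Module.Finite (AddMonoidAlgebra k G)[T;T⁻¹] P]
    [Module.Projective (AddMonoidAlgebra k G)[T;T⁻¹] P] :
    ∃ (r : ℕ) (f : (Fin r → (AddMonoidAlgebra k G)[T;T⁻¹]) →ₗ[(AddMonoidAlgebra k G)[T;T⁻¹]] P)
      (φ : P →ₗ[(AddMonoidAlgebra k G)[T;T⁻¹]] Fin r → (AddMonoidAlgebra k G)[T;T⁻¹])
      (s : (AddMonoidAlgebra k G)[T;T⁻¹]),
      IsDoublyMonic s ∧ f ∘ₗ φ = s • .id ∧ φ ∘ₗ f = s • .id := by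
  let e : AddMonoidAlgebra k[T;T⁻¹] G ≃+* (AddMonoidAlgebra k G)[T;T⁻¹] :=
    AddMonoidAlgebra.commRingEquiv
  let S := (Algebra.algebraMapSubmonoid (AddMonoidAlgebra k[T;T⁻¹] G) k[T;T⁻¹]⁰).map e
  have hS {s} (hs : s ∈ S) : IsDoublyMonic s := by
    obtain ⟨_, ⟨f, hf, rfl⟩, rfl⟩ := hs
    exact isDoublyMonic_commRingEquiv_single_zero (nonZeroDivisors.ne_zero hf)
  have := isLocalization_addMonoidAlgebra k[T;T⁻¹]⁰ K G
  let := ((algebraMap (AddMonoidAlgebra k[T;T⁻¹] G) (AddMonoidAlgebra K G)).comp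
    e.symm.toRingHom).toAlgebra
  have : IsLocalization S (AddMonoidAlgebra K G) :=
    IsLocalization.isLocalization_of_base_ringEquiv _ _ e
  obtain ⟨r, f, φ, s, hs, hfφ, hφf⟩ :=
    exists_comp_eq_smul_id S (fun _ hs ↦ (hS hs).mem_nonZeroDivisors) hK P
  exact ⟨r, f, φ, s, hS hs, hfφ, hφf⟩

theorem ProjectivesFree.laurentPolynomial {K : Type*} [Field K] [Algebra k[T;T⁻¹] K]
    [IsFractionRing k[T;T⁻¹] K] {ι : Type*} [Finite ι]
    (hk : ProjectivesFree (AddMonoidAlgebra k (ι → ℤ)))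
    (hK : ProjectivesFree (AddMonoidAlgebra K (ι → ℤ))) :
    ProjectivesFree (AddMonoidAlgebra k (ι → ℤ))[T;T⁻¹] := by
  intro P _ _ _ _
  obtain ⟨r, f, φ, s, hs, hfφ, hφf⟩ := exists_isDoublyMonic_comp_eq_smul_id (k := k) hK P
  have := hs.isStablyFree hk hfφ hφf
  exact isHermite_laurentPolynomial_addMonoidAlgebra.free_of_isStablyFree P

theorem projectivesFree_addMonoidAlgebra (k : Type u) [Field k] (n : ℕ) :
    ProjectivesFree (AddMonoidAlgebra k (Fin n → ℤ)) := by
  induction n generalizing k with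
  | zero =>
    have hk : ProjectivesFree k := fun P _ _ _ _ ↦ inferInstance
    exact hk.of_ringEquiv (AddMonoidAlgebra.uniqueRingEquiv (Fin 0 → ℤ)).symm
  | succ n ih =>
    let e : (AddMonoidAlgebra k (Fin n → ℤ))[T;T⁻¹] ≃+* AddMonoidAlgebra k (Fin (n + 1) → ℤ) :=
      AddMonoidAlgebra.curryRingEquiv.symm.trans (AddMonoidAlgebra.mapDomainRingEquiv k
        (Fin.consLinearEquiv ℤ fun _ ↦ ℤ).toAddEquiv)
    exact ((ih k).laurentPolynomial (ih (FractionRing k[T;T⁻¹]))).of_ringEquiv e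

end Induction

/-! ### Laurent polynomials as a localization -/

section Laurent

variable {σ R : Type*} [CommRing R]

/-- The embedding of polynomials into Laurent polynomials, the latter encoded as the group algebra
of the exponents. -/
noncomputable def mvToLaurent (σ R : Type*) [CommRing R] :
    MvPolynomial σ R →+* AddMonoidAlgebra R (σ → ℤ) :=
  AddMonoidAlgebra.mapDomainRingHom R
    ((Nat.castAddMonoidHom ℤ).compLeft σ |>.comp Finsupp.coeFnAddHom)

lemma mvToLaurent_monomial (t : σ →₀ ℕ) (c : R) :
    mvToLaurent σ R (monomial t c) = .single (fun i ↦ (t i : ℤ)) c :=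
  AddMonoidAlgebra.mapDomain_single

lemma mvToLaurent_injective : Function.Injective (mvToLaurent σ R) :=
  AddMonoidAlgebra.mapDomain_injective fun _ _ h ↦
    Finsupp.ext fun i ↦ Int.ofNat_injective (congrFun h i)

lemma isUnit_mvToLaurent {p : MvPolynomial σ R} (hp : p ∈ Submonoid.closure (Set.range X)) :
    IsUnit (mvToLaurent σ R p) := by
  suffices Submonoid.closure (Set.range X) ≤ (IsUnit.submonoid _).comap (mvToLaurent σ R) from
    this hp
  rw [Submonoid.closure_le]
  rintro _ ⟨i, rfl⟩
  change IsUnit (mvToLaurent σ R (monomial (Finsupp.single i 1) 1))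
  rw [mvToLaurent_monomial]
  exact (Group.isUnit (Multiplicative.ofAdd _)).map (AddMonoidAlgebra.of R (σ → ℤ))

lemma monomial_one_mem_closure_range_X (t : σ →₀ ℕ) :
    monomial t (1 : R) ∈ Submonoid.closure (Set.range X) := by
  rw [monomial_eq, C_1, one_mul]
  exact prod_mem fun i _ ↦ pow_mem (Submonoid.subset_closure (Set.mem_range_self i)) _

lemma exists_mul_mvToLaurent_eq [Finite σ] (f : AddMonoidAlgebra R (σ → ℤ)) :
    ∃ p, ∃ q ∈ Submonoid.closure (Set.range X),
      f * mvToLaurent σ R q = mvToLaurent σ R p := by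
  induction f using AddMonoidAlgebra.induction_linear with
  | zero => exact ⟨0, 1, one_mem _, by rw [zero_mul, map_zero]⟩
  | add f f' hf hf' =>
    obtain ⟨p, q, hq, h⟩ := hf
    obtain ⟨p', q', hq', h'⟩ := hf'
    refine ⟨p * q' + p' * q, q * q', mul_mem hq hq', ?_⟩
    rw [map_add, map_mul, map_mul, map_mul, ← h, ← h']
    ring
  | single g c =>
    refine ⟨monomial (Finsupp.equivFunOnFinite.symm fun i ↦ (g i).toNat) c, _,
      monomial_one_mem_closure_range_X (Finsupp.equivFunOnFinite.symm fun i ↦ (-g i).toNat), ?_⟩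
    rw [mvToLaurent_monomial, mvToLaurent_monomial, AddMonoidAlgebra.single_mul_single, mul_one]
    congr 1
    ext i
    exact add_eq_of_eq_sub (Int.toNat_sub_toNat_neg (g i)).symm

theorem isLocalization_mvToLaurent (σ R : Type*) [Finite σ] [CommRing R] :
    let := (mvToLaurent σ R).toAlgebra
    IsLocalization (Submonoid.closure (Set.range (X : σ → MvPolynomial σ R)))
      (AddMonoidAlgebra R (σ → ℤ)) := by
  let := (mvToLaurent σ R).toAlgebra
  refine (isLocalization_iff _ _).2 ⟨fun q ↦ isUnit_mvToLaurent q.2, fun f ↦ ?_,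
    fun {x y} hxy ↦ ⟨1, by rw [mvToLaurent_injective hxy]⟩⟩
  obtain ⟨p, q, hq, h⟩ := exists_mul_mvToLaurent_eq f
  exact ⟨(p, ⟨q, hq⟩), h⟩

end Laurent

end SwanLaurent

/-- Swan's generalization of the Quillen–Suslin theorem: every finitely generated
projective module over the Laurent polynomial ring
`k[x₁, x₁⁻¹, …, x_d, x_d⁻¹]` over a field `k` — i.e. the localization of
`k[x₁, …, x_d]` at the multiplicative set generated by `x₁, …, x_d` — is free. -/
theorem projective_module_over_laurent_ring_free
    (k : Type*) [Field k] (d : ℕ)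
    (R : Type*) [CommRing R] [Algebra (MvPolynomial (Fin d) k) R]
    [IsLocalization
      (Submonoid.closure (Set.range (X : Fin d → MvPolynomial (Fin d) k))) R]
    (P : Type*) [AddCommGroup P] [Module R P]
    [Module.Finite R P] [Module.Projective R P] :
    Module.Free R P := by
  let := (SwanLaurent.mvToLaurent (Fin d) k).toAlgebra
  have := SwanLaurent.isLocalization_mvToLaurent (Fin d) k
  let e : AddMonoidAlgebra k (Fin d → ℤ) ≃ₐ[MvPolynomial (Fin d) k] R :=
    IsLocalization.algEquiv (Submonoid.closure (Set.range X)) _ _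
  exact ((SwanLaurent.projectivesFree_addMonoidAlgebra k d).of_ringEquiv e.toRingEquiv).free P
end

section
/- Every finitely generated projective module over the mixed Laurent polynomial ring k[x₁^{±1}, ..., xₐ^{±1}, y₁, ..., y_b] over a field k is free. -/
open MvPolynomial

/-!
A finitely generated projective module is the image of an idempotent matrix `e`, so it is enough to
show that such images are free over `k[G]` with `G = ℤ^a × ℕ^b`. We adjoin one variable at a time.

Let `A = k[G]` be a domain whose finitely generated projective modules are free. Inverting the
nonzero polynomials in `k[X]` turns `A[X]` into the monoid algebra `k(X)[G]`, to which the induction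
hypothesis applies, because that hypothesis ranges over all fields. Hence a projective module over
`A[X]` becomes free once a single monic `f ∈ k[X]` is inverted. Locally on `A`, such a module
extends to the projective line by a trivial bundle near infinity, and Horrocks' theorem makes it
free; Quillen patching then shows that it is extended from `A`, hence free.

Over `A[X, X⁻¹]` the factors `X` of `f` are invertible, so `f` may be taken prime to `X`. The module
can therefore be glued with a free module over the locus where `f` is invertible, which extends it
to a module over `A[X]` that becomes free once `f` is inverted, and the polynomial case applies.
-/

section IdempotentMatrices

open Matrix

variable {R S : Type*} {l m n : Type*} [Fintype l] [Fintype m] [Fintype n]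

/-- Murray–von Neumann equivalence of square matrices, possibly of different sizes: two idempotent
matrices are equivalent exactly when the projective modules that are their images are isomorphic. -/
def IdempotentEquiv [Semiring R] (e : Matrix m m R) (e' : Matrix n n R) : Prop :=
  ∃ (U : Matrix m n R) (V : Matrix n m R), U * V = e ∧ V * U = e'

/-- The image of the idempotent matrix `e` is a free module of finite rank. -/
def HasFreeRange [Semiring R] (e : Matrix m m R) : Prop :=
  ∃ r : ℕ, IdempotentEquiv e (1 : Matrix (Fin r) (Fin r) R)

/-- The image of the idempotent matrix `e` becomes free once `f` is inverted; the witnesses are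
required to have entries in `R` itself, so that no localization appears. -/
def HasFreeRangeAway [CommSemiring R] (f : R) (e : Matrix m m R) : Prop :=
  ∃ (r : ℕ) (U : Matrix m (Fin r) R) (V : Matrix (Fin r) m R), U * V = f • e ∧ V * U = f • 1

/-- Projective-free rings (in the sense of Cohn): every idempotent matrix has free image. Phrasing
this with matrices instead of modules keeps it free of universe parameters. -/
def IsProjectiveFree (R : Type*) [Semiring R] : Prop :=
  ∀ (n : ℕ) (e : Matrix (Fin n) (Fin n) R), IsIdempotentElem e → HasFreeRange e

lemma isIdempotentElem_matrix_map [Semiring R] [Semiring S] {e : Matrix m m R}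
    (he : IsIdempotentElem e) (φ : R →+* S) : IsIdempotentElem (e.map φ) := by
  rw [IsIdempotentElem, ← Matrix.map_mul, he.eq]

namespace IdempotentEquiv

variable [Semiring R] [Semiring S]

lemma refl {e : Matrix m m R} (he : IsIdempotentElem e) : IdempotentEquiv e e :=
  ⟨e, e, he, he⟩

lemma trans {e : Matrix l l R} {e' : Matrix m m R} {e'' : Matrix n n R}
    (he : IsIdempotentElem e) (he'' : IsIdempotentElem e'')
    (h : IdempotentEquiv e e') (h' : IdempotentEquiv e' e'') : IdempotentEquiv e e'' := by
  obtain ⟨U, V, rfl, hVU⟩ := h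
  obtain ⟨U', V', hUV', rfl⟩ := h'
  refine ⟨U * U', V' * V, ?_, ?_⟩
  · calc U * U' * (V' * V) = U * (U' * V') * V := by simp only [Matrix.mul_assoc]
      _ = U * V * (U * V) := by rw [hUV', ← hVU]; simp only [Matrix.mul_assoc]
      _ = U * V := he
  · calc V' * V * (U * U') = V' * (V * U) * U' := by simp only [Matrix.mul_assoc]
      _ = V' * U' * (V' * U') := by rw [hVU, ← hUV']; simp only [Matrix.mul_assoc]
      _ = V' * U' := he''

lemma map {e : Matrix m m R} {e' : Matrix n n R} (h : IdempotentEquiv e e') (φ : R →+* S) :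
    IdempotentEquiv (e.map φ) (e'.map φ) := by
  obtain ⟨U, V, rfl, rfl⟩ := h
  exact ⟨U.map φ, V.map φ, (Matrix.map_mul ..).symm, (Matrix.map_mul ..).symm⟩

lemma submatrix_equiv {e : Matrix m m R} (he : IsIdempotentElem e) (σ : n ≃ m) :
    IdempotentEquiv e (e.submatrix σ σ) := by
  refine ⟨e.submatrix id σ, e.submatrix σ id, ?_, ?_⟩
  · rw [submatrix_mul_equiv, he.eq, submatrix_id_id]
  · rw [← submatrix_mul e e σ id σ Function.bijective_id, he.eq]

end IdempotentEquiv

namespace HasFreeRange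

variable [Semiring R] [Semiring S]

lemma of_idempotentEquiv {e : Matrix m m R} {e' : Matrix n n R} (he : IsIdempotentElem e)
    (h : IdempotentEquiv e e') (h' : HasFreeRange e') : HasFreeRange e :=
  h'.imp fun _ h' ↦ h.trans he .one h'

lemma map {e : Matrix m m R} (h : HasFreeRange e) (φ : R →+* S) : HasFreeRange (e.map φ) := by
  obtain ⟨r, h⟩ := h
  exact ⟨r, by simpa using h.map φ⟩

end HasFreeRange

namespace HasFreeRangeAway

variable [CommSemiring R] [CommSemiring S]

lemma map {f : R} {e : Matrix m m R} (h : HasFreeRangeAway f e) (φ : R →+* S) :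
    HasFreeRangeAway (φ f) (e.map φ) := by
  obtain ⟨r, U, V, hUV, hVU⟩ := h
  refine ⟨r, U.map φ, V.map φ, ?_, ?_⟩
  · rw [← Matrix.map_mul, hUV, Matrix.map_smul' _ _ _ (map_mul φ)]
  · rw [← Matrix.map_mul, hVU, Matrix.map_smul' _ _ _ (map_mul φ)]
    simp

lemma of_isUnit_mul {u f : R} {e : Matrix m m R} (hu : IsUnit u)
    (h : HasFreeRangeAway (u * f) e) : HasFreeRangeAway f e := by
  obtain ⟨v, huv⟩ := hu.exists_left_inv
  obtain ⟨r, U, V, hUV, hVU⟩ := h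
  refine ⟨r, v • U, V, ?_, ?_⟩
  · rw [smul_mul, hUV, smul_smul, ← mul_assoc, huv, one_mul]
  · rw [Matrix.mul_smul, hVU, smul_smul, ← mul_assoc, huv, one_mul]

lemma hasFreeRange {f : R} {e : Matrix m m R} (hf : IsUnit f) (h : HasFreeRangeAway f e) :
    HasFreeRange e := by
  obtain ⟨r, U, V, hUV, hVU⟩ := of_isUnit_mul (f := 1) hf (by rwa [mul_one])
  exact ⟨r, U, V, by rw [hUV, one_smul], by rw [hVU, one_smul]⟩

end HasFreeRangeAway

end IdempotentMatrices

section Denominators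

open Matrix

variable {R S : Type*} [CommRing R] [CommRing S] [Algebra R S] {m n : Type*}

lemma exists_matrix_map_eq_smul_of_isLocalization [Finite m] [Finite n] (M : Submonoid R)
    [IsLocalization M S] (A : Matrix m n S) :
    ∃ b ∈ M, ∃ B : Matrix m n R, B.map (algebraMap R S) = algebraMap R S b • A := by
  obtain ⟨b, hb⟩ := IsLocalization.exist_integer_multiples_of_finite M fun p : m × n ↦ A p.1 p.2
  choose B hB using hb
  exact ⟨b, b.2, of fun i j ↦ B (i, j), by ext i j; simp [hB, Algebra.smul_def]⟩

lemma HasFreeRange.exists_hasFreeRangeAway [Fintype m] (M : Submonoid R) [IsLocalization M S]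
    (hM : M ≤ nonZeroDivisors R) {e : Matrix m m R} (h : HasFreeRange (e.map (algebraMap R S))) :
    ∃ f ∈ M, HasFreeRangeAway f e := by
  obtain ⟨r, U, V, hUV, hVU⟩ := h
  obtain ⟨b, hb, U', hU'⟩ := exists_matrix_map_eq_smul_of_isLocalization M U
  obtain ⟨c, hc, V', hV'⟩ := exists_matrix_map_eq_smul_of_isLocalization M V
  have hinj : Function.Injective (algebraMap R S) := IsLocalization.injective S hM
  refine ⟨b * c, mul_mem hb hc, r, U', V', Matrix.map_injective hinj ?_,
    Matrix.map_injective hinj ?_⟩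
  · beta_reduce
    rw [Matrix.map_mul, hU', hV', Matrix.map_smul' _ _ _ (map_mul _), Matrix.smul_mul,
      Matrix.mul_smul, smul_smul, hUV, map_mul]
  · beta_reduce
    rw [Matrix.map_mul, hU', hV', Matrix.map_smul' _ _ _ (map_mul _), Matrix.smul_mul,
      Matrix.mul_smul, smul_smul, hVU, map_mul, mul_comm]
    simp

end Denominators

namespace IsProjectiveFree

open Matrix

variable {R S : Type*}

lemma hasFreeRange [Semiring R] (hR : IsProjectiveFree R) {m : Type*} [Fintype m]
    {e : Matrix m m R} (he : IsIdempotentElem e) : HasFreeRange e :=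
  let σ := (Fintype.equivFin m).symm
  .of_idempotentEquiv he (.submatrix_equiv he σ) <| hR _ _ <| by
    rw [IsIdempotentElem, submatrix_mul_equiv, he.eq]

lemma of_ringEquiv [Semiring R] [Semiring S] (hR : IsProjectiveFree R) (φ : R ≃+* S) :
    IsProjectiveFree S := fun n e he ↦ by
  have h := (hR n _ (isIdempotentElem_matrix_map he φ.symm.toRingHom)).map φ.toRingHom
  simpa [Function.comp_def] using h

lemma of_isPrincipalIdealRing (R : Type*) [CommRing R] [IsDomain R] [IsPrincipalIdealRing R] :
    IsProjectiveFree R := fun n e he ↦ by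
  let P := LinearMap.range (toLin' e)
  obtain ⟨r, b⟩ := Submodule.basisOfPid (Pi.basisFun R (Fin n)) P
  let ι : (Fin r → R) →ₗ[R] (Fin n → R) := P.subtype ∘ₗ b.equivFun.symm.toLinearMap
  let π : (Fin n → R) →ₗ[R] (Fin r → R) := b.equivFun.toLinearMap ∘ₗ (toLin' e).rangeRestrict
  have hP : ∀ x : P, (toLin' e).rangeRestrict x = x := by
    rintro ⟨_, y, rfl⟩
    apply Subtype.ext
    simp [he.eq]
  refine ⟨r, LinearMap.toMatrix' ι, LinearMap.toMatrix' π, ?_, ?_⟩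
  · rw [← LinearMap.toMatrix'_comp, ← LinearMap.toMatrix'_toLin' e]
    congr 1
    ext
    simp [ι, π]
  · rw [← LinearMap.toMatrix'_comp, ← LinearMap.toMatrix'_id]
    exact congrArg _ (LinearMap.ext fun x ↦ by simp [ι, π, hP, -Module.Basis.equivFun_symm_apply])

lemma free [CommRing R] (hR : IsProjectiveFree R) (P : Type*) [AddCommGroup P] [Module R P]
    [Module.Finite R P] [Module.Projective R P] : Module.Free R P := by
  obtain ⟨n, π, ι, -, -, hπι⟩ := Module.Finite.exists_comp_eq_id_of_projective R P
  have hπι (x : P) : π (ι x) = x := LinearMap.congr_fun hπι x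
  obtain ⟨r, U, V, hUV, hVU⟩ := hR n (LinearMap.toMatrix' (ι ∘ₗ π)) <| by
    rw [IsIdempotentElem, ← LinearMap.toMatrix'_mul]
    congr 1
    ext
    simp [hπι]
  have hUV (x) : U *ᵥ (V *ᵥ x) = ι (π x) := by
    rw [mulVec_mulVec, hUV, LinearMap.toMatrix'_mulVec, LinearMap.comp_apply]
  have hVU (x) : V *ᵥ (U *ᵥ x) = x := by rw [mulVec_mulVec, hVU, one_mulVec]
  refine Module.Free.of_equiv (LinearEquiv.ofLinearMap (π ∘ₗ U.mulVecLin) (V.mulVecLin ∘ₗ ι) ?_ ?_)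
  · refine LinearMap.ext fun x ↦ ?_
    simp [hUV, hπι]
  · refine LinearMap.ext fun x ↦ ?_
    simp [← hUV, hVU]

end IsProjectiveFree

section LiftingFrames

open Matrix

variable {R K : Type*} [CommRing R] [Field K] {m n : Type*} [Fintype m] [Fintype n]

lemma generalLinearGroup_map_surjective [DecidableEq n] {ρ : R →+* K}
    (hρ : Function.Surjective (Units.map ρ.toMonoidHom)) :
    Function.Surjective (GeneralLinearGroup.map (n := n) ρ) := by
  have hρ_unit {z : K} (hz : z ≠ 0) : ∃ u : Rˣ, ρ u = z := by
    obtain ⟨u, hu⟩ := hρ (Units.mk0 z hz)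
    exact ⟨u, congrArg Units.val hu⟩
  have hρ_surj (z : K) : ∃ x, ρ x = z := by
    obtain rfl | hz := eq_or_ne z 0
    exacts [⟨0, map_zero ρ⟩, (hρ_unit hz).imp' _ fun _ ↦ id]
  intro g
  suffices ∃ G : GL n R, G.val.map ρ = g from this.imp fun G hG ↦ Units.ext hG
  refine diagonal_transvection_induction_of_det_ne_zero (fun g ↦ ∃ G : GL n R, G.val.map ρ = g) _
    g.det.ne_zero (fun D hD ↦ ?_) (fun t ↦ ?_) fun g h _ _ hg hh ↦ ?_
  · rw [det_diagonal, Finset.prod_ne_zero_iff] at hD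
    choose u hu using fun i ↦ hρ_unit (hD i (Finset.mem_univ i))
    refine ⟨Units.map (diagonalRingHom n R) (MulEquiv.piUnits.symm u), ?_⟩
    ext i j
    obtain rfl | hij := eq_or_ne i j
    · simp [hu]
    · simp [hij]
  · obtain ⟨c, hc⟩ := hρ_surj t.c
    let T : TransvectionStruct n R := ⟨t.i, t.j, t.hij, c⟩
    refine ⟨⟨T.toMatrix, T.inv.toMatrix, T.mul_inv, T.inv_mul⟩, ?_⟩
    ext i j
    simp [T, TransvectionStruct.toMatrix, transvection, one_apply, single_apply, apply_ite ρ, hc]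
  · obtain ⟨G, rfl⟩ := hg
    obtain ⟨H, rfl⟩ := hh
    exact ⟨G * H, by simp⟩

/-- The images of `e` and of its reduction along `ρ` have the same rank, and two bases of the
latter differ by an element of `GL K`, which lifts to `GL R`. -/
lemma HasFreeRange.exists_lift {ρ : R →+* K} (hρ : Function.Surjective (Units.map ρ.toMonoidHom))
    {e : Matrix m m R} (he : HasFreeRange e) {s : ℕ} {U' : Matrix m (Fin s) K}
    {V' : Matrix (Fin s) m K} (hUV' : U' * V' = e.map ρ) (hVU' : V' * U' = 1) :
    ∃ (U : Matrix m (Fin s) R) (V : Matrix (Fin s) m R),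
      U * V = e ∧ V * U = 1 ∧ U.map ρ = U' ∧ V.map ρ = V' := by
  obtain ⟨r, U, V, rfl, hVU⟩ := he
  have hVU_map : V.map ρ * U.map ρ = 1 := by rw [← Matrix.map_mul, hVU]; simp
  rw [Matrix.map_mul] at hUV'
  have hg : V.map ρ * U' * (V' * U.map ρ) = 1 := by
    rw [Matrix.mul_assoc, ← Matrix.mul_assoc U', hUV', Matrix.mul_assoc, hVU_map, Matrix.mul_one,
      hVU_map]
  have hg' : V' * U.map ρ * (V.map ρ * U') = 1 := by
    rw [Matrix.mul_assoc, ← Matrix.mul_assoc _ _ U', ← hUV', Matrix.mul_assoc, hVU', Matrix.mul_one,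
      hVU']
  obtain rfl : r = s := by simpa using square_of_invertible _ _ hg hg'
  obtain ⟨G, hG⟩ := generalLinearGroup_map_surjective hρ ⟨_, _, hg, hg'⟩
  have hG_inv : (G⁻¹).val.map ρ = V' * U.map ρ := congrArg (fun g ↦ (g⁻¹).val) hG
  have hG : G.val.map ρ = V.map ρ * U' := congrArg Units.val hG
  refine ⟨U * G.val, (G⁻¹).val * V, ?_, ?_, ?_, ?_⟩
  · rw [Matrix.mul_assoc, ← Matrix.mul_assoc G.val, Units.mul_inv, Matrix.one_mul]
  · rw [Matrix.mul_assoc, ← Matrix.mul_assoc V, hVU, Matrix.one_mul, Units.inv_mul]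
  · rw [Matrix.map_mul, hG, ← Matrix.mul_assoc, ← hUV', Matrix.mul_assoc, hVU', Matrix.mul_one]
  · rw [Matrix.map_mul, hG_inv, Matrix.mul_assoc, ← hUV', ← Matrix.mul_assoc, hVU', Matrix.one_mul]

end LiftingFrames

section Nakayama

variable {A B M : Type*} [CommRing A] [CommRing B] [Algebra A B] [AddCommGroup M] [Module A M]
  [Module B M] [IsScalarTower A B M] [Module.Finite B M]

/-- `M` itself need not be finite over `A`, but `M / JM` is. -/
lemma eq_top_of_smul_top_le_of_sup_smul_top_eq_top {I : Ideal A} (hI : I ≤ Ideal.jacobson ⊥)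
    (J : Ideal B) [Module.Finite A (B ⧸ J)] {N : Submodule A M}
    (hJN : (J • (⊤ : Submodule B M)).restrictScalars A ≤ N)
    (hIN : N ⊔ I • (⊤ : Submodule A M) = ⊤) : N = ⊤ := by
  let JM := J • (⊤ : Submodule B M)
  let π := JM.mkQ.restrictScalars A
  have hπ : Function.Surjective π := JM.mkQ_surjective
  have : Module.Finite A (M ⧸ JM) := Module.Finite.trans (B ⧸ J) _
  have hNπ : ⊤ ≤ N.map π ⊔ I • ⊤ := by
    rw [← LinearMap.range_eq_top.mpr hπ, ← Submodule.map_top, ← Submodule.map_smul'',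
      ← Submodule.map_sup, hIN]
  have hNπ : N.map π = ⊤ :=
    top_le_iff.mp (Submodule.le_of_le_smul_of_le_jacobson_bot Module.Finite.fg_top hI hNπ)
  have hker : LinearMap.ker π ≤ N := by
    rwa [LinearMap.ker_restrictScalars, Submodule.ker_mkQ]
  rw [← sup_eq_left.mpr hker, ← Submodule.comap_map_eq, hNπ, Submodule.comap_top]

end Nakayama

section LocalHorrocks

open Matrix
open IsLocalRing
open scoped Polynomial

/-- The multiplicative set of monic polynomials. -/
def monicSubmonoid (A : Type*) [CommRing A] : Submonoid A[X] where
  carrier := {f | f.Monic}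
  one_mem' := Polynomial.monic_one
  mul_mem' := Polynomial.Monic.mul

/-- The ring `A⟨X⟩` obtained from `A[X]` by inverting the monic polynomials: the functions on a
neighbourhood of the section at infinity of the projective line over `A`. -/
abbrev MonicLocalization (A : Type*) [CommRing A] : Type _ :=
  Localization (monicSubmonoid A)

lemma monicSubmonoid_le_nonZeroDivisors (A : Type*) [CommRing A] :
    monicSubmonoid A ≤ nonZeroDivisors A[X] :=
  fun _ hf ↦ Polynomial.Monic.mem_nonZeroDivisors hf

section ProperFractions

variable {A : Type*} [CommRing A]

lemma algebraMap_monicLocalization_injective :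
    Function.Injective (algebraMap A[X] (MonicLocalization A)) :=
  IsLocalization.injective _ (monicSubmonoid_le_nonZeroDivisors A)

/-- The fractions `p / q` with `q` monic and `deg p < deg q`: those vanishing at infinity. -/
def properFractions (A : Type*) [CommRing A] [Nontrivial A] :
    NonUnitalSubalgebra A (MonicLocalization A) where
  carrier := {z | ∃ p q : A[X], q.Monic ∧ p.degree < q.degree ∧
    z * algebraMap A[X] (MonicLocalization A) q = algebraMap A[X] (MonicLocalization A) p}
  zero_mem' := ⟨0, 1, Polynomial.monic_one, by simp, by simp⟩
  add_mem' := by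
    rintro z z' ⟨p, q, hq, hpq, hz⟩ ⟨p', q', hq', hpq', hz'⟩
    refine ⟨p * q' + p' * q, q * q', hq.mul hq', ?_, ?_⟩
    · refine (Polynomial.degree_add_le _ _).trans_lt (max_lt ?_ ?_)
      · rw [hq'.degree_mul, hq'.degree_mul]
        exact WithBot.add_lt_add_right hpq'.ne_bot hpq
      · rw [hq.degree_mul, hq'.degree_mul, add_comm q.degree]
        exact WithBot.add_lt_add_right hpq.ne_bot hpq'
    · simp only [map_add, map_mul, ← hz, ← hz']
      ring
  mul_mem' := by
    rintro z z' ⟨p, q, hq, hpq, hz⟩ ⟨p', q', hq', hpq', hz'⟩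
    refine ⟨p * p', q * q', hq.mul hq', ?_, ?_⟩
    · refine (Polynomial.degree_mul_le _ _).trans_lt ?_
      rw [hq'.degree_mul]
      exact (add_le_add_right hpq'.le _).trans_lt (WithBot.add_lt_add_right hpq'.ne_bot hpq)
    · simp only [map_mul, ← hz, ← hz']
      ring
  smul_mem' := by
    rintro c z ⟨p, q, hq, hpq, hz⟩
    exact ⟨c • p, q, hq, (Polynomial.degree_smul_le c p).trans_lt hpq, by
      rw [smul_mul_assoc, hz, algebraMap.smul]⟩

lemma eq_zero_of_algebraMap_mem_properFractions [Nontrivial A] {g : A[X]}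
    (hg : algebraMap A[X] (MonicLocalization A) g ∈ properFractions A) : g = 0 := by
  obtain ⟨p, q, hq, hpq, hg⟩ := hg
  rw [← map_mul, algebraMap_monicLocalization_injective.eq_iff] at hg
  by_contra hg0
  rw [← hg, hq.degree_mul] at hpq
  exact hpq.not_ge (le_add_of_nonneg_left (Polynomial.zero_le_degree_iff.mpr hg0))

end ProperFractions

section Reduction

variable {A : Type*} [CommRing A] [IsLocalRing A]

/-- Reduction modulo the maximal ideal, `A⟨X⟩ → κ(X)`. -/
noncomputable def monicLocalizationReduction (A : Type*) [CommRing A] [IsLocalRing A] :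
    MonicLocalization A →+* RatFunc (ResidueField A) :=
  IsLocalization.map (M := monicSubmonoid A) (T := nonZeroDivisors (ResidueField A)[X]) _
    (Polynomial.mapRingHom (residue A))
    fun _ hf ↦ (Polynomial.Monic.map _ hf).mem_nonZeroDivisors

lemma monicLocalizationReduction_algebraMap (p : A[X]) :
    monicLocalizationReduction A (algebraMap A[X] (MonicLocalization A) p) =
      algebraMap (ResidueField A)[X] (RatFunc (ResidueField A)) (p.map (residue A)) :=
  IsLocalization.map_eq _ _

lemma exists_unit_monicLocalizationReduction_eq {p : (ResidueField A)[X]} (hp : p ≠ 0) :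
    ∃ u : (MonicLocalization A)ˣ, monicLocalizationReduction A u =
      algebraMap _ (RatFunc (ResidueField A)) p := by
  have hc : p.leadingCoeff ≠ 0 := Polynomial.leadingCoeff_ne_zero.mpr hp
  obtain ⟨q, hq, -, hq_monic⟩ := Polynomial.lifts_and_degree_eq_and_monic
    ((Polynomial.mem_lifts _).mpr (Polynomial.map_surjective _ residue_surjective
      (p * Polynomial.C p.leadingCoeff⁻¹))) (Polynomial.monic_mul_leadingCoeff_inv hp)
  obtain ⟨a, ha⟩ := residue_surjective p.leadingCoeff
  have ha_unit : IsUnit a := by rwa [← residue_ne_zero_iff_isUnit, ha]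
  have hq_unit : IsUnit (algebraMap A[X] (MonicLocalization A) q) :=
    IsLocalization.map_units (MonicLocalization A) (⟨q, hq_monic⟩ : monicSubmonoid A)
  refine ⟨((ha_unit.map Polynomial.C).map (algebraMap A[X] _)).unit * hq_unit.unit, ?_⟩
  rw [Units.val_mul, IsUnit.unit_spec, IsUnit.unit_spec, ← map_mul,
    monicLocalizationReduction_algebraMap, Polynomial.map_mul, hq, Polynomial.map_C, ha,
    mul_left_comm, ← Polynomial.C_mul, mul_inv_cancel₀ hc, Polynomial.C_1, mul_one]

lemma monicLocalizationReduction_units_surjective : Function.Surjective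
    (Units.map (monicLocalizationReduction A).toMonoidHom) := by
  intro z
  obtain ⟨p, q, hq, hpq⟩ := IsFractionRing.div_surjective (A := (ResidueField A)[X]) z.val
  have hp : p ≠ 0 := by rintro rfl; exact z.ne_zero (by simp [← hpq])
  obtain ⟨u, hu⟩ := exists_unit_monicLocalizationReduction_eq hp
  obtain ⟨v, hv⟩ := exists_unit_monicLocalizationReduction_eq (nonZeroDivisors.ne_zero hq)
  exact ⟨u / v, Units.ext (by simp [← hpq, hu, hv, div_eq_mul_inv])⟩

lemma exists_sub_mem_properFractions_of_reduction_eq_zero {z : MonicLocalization A}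
    (hz : monicLocalizationReduction A z = 0) :
    ∃ g : A[X], g.map (residue A) = 0 ∧
      z - algebraMap A[X] (MonicLocalization A) g ∈ properFractions A := by
  obtain ⟨⟨p, q, hq⟩, hpq⟩ := IsLocalization.surj (monicSubmonoid A) z
  have hp : p.map (residue A) = 0 := by
    apply IsFractionRing.injective (ResidueField A)[X] (RatFunc (ResidueField A))
    rw [← monicLocalizationReduction_algebraMap, ← hpq, map_mul, hz, zero_mul, map_zero]
  refine ⟨p /ₘ q, by rw [Polynomial.map_divByMonic _ hq, hp, Polynomial.zero_divByMonic],
    p %ₘ q, q, hq, Polynomial.degree_modByMonic_lt p hq, ?_⟩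
  rw [sub_mul, hpq, ← map_mul, ← map_sub, mul_comm, sub_eq_iff_eq_add.mpr
    (Polynomial.modByMonic_add_div p q).symm]

end Reduction

section Vanishing

variable {A : Type*} [CommRing A] [IsLocalRing A] {n r : Type*} [Fintype n]

local notation "ι" => algebraMap A[X] (MonicLocalization A)

/-- The vectors of polynomials that are the sum of a vector `V w`, with `w` polynomial, and of a
vector of proper fractions. Its cokernel is the first cohomology group of the vector bundle on the
projective line over `A` that has `V` as its transition matrix, twisted so as to vanish at
infinity. -/
def polynomialAddProper (V : Matrix r n (MonicLocalization A)) : Submodule A (r → A[X]) where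
  carrier := {y | ∃ w : n → A[X], ∀ i, ι (y i) - (V *ᵥ (ι ∘ w)) i ∈ properFractions A}
  zero_mem' := ⟨0, fun i ↦ by simp [Function.comp_def, ← Pi.zero_def]⟩
  add_mem' := by
    rintro y y' ⟨w, hw⟩ ⟨w', hw'⟩
    refine ⟨w + w', fun i ↦ ?_⟩
    convert add_mem (hw i) (hw' i) using 1
    have : ι ∘ (w + w') = ι ∘ w + ι ∘ w' := by ext; simp
    simp only [this, Matrix.mulVec_add, Pi.add_apply, map_add]
    ring
  smul_mem' := by
    rintro c y ⟨w, hw⟩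
    refine ⟨c • w, fun i ↦ ?_⟩
    convert SMulMemClass.smul_mem c (hw i) using 1
    have : ι ∘ (c • w) = c • ι ∘ w := by ext; simp [algebraMap.smul]
    simp only [this, Matrix.mulVec_smul, Pi.smul_apply, algebraMap.smul, smul_sub]

variable [Finite r]

lemma mem_maximalIdeal_smul_top_of_map_residue_eq_zero {g : r → A[X]}
    (hg : ∀ i, (g i).map (residue A) = 0) :
    g ∈ maximalIdeal A • (⊤ : Submodule A (r → A[X])) := by
  classical
  cases nonempty_fintype r
  rw [← Finset.univ_sum_single g]
  refine sum_mem fun j _ ↦ ?_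
  have hgj : g j ∈ maximalIdeal A • (⊤ : Submodule A A[X]) := by
    rw [Ideal.smul_top_eq_map, Submodule.restrictScalars_mem, Polynomial.algebraMap_eq,
      ← ker_residue, ← Polynomial.ker_mapRingHom, RingHom.mem_ker]
    exact hg j
  have := Submodule.mem_map_of_mem (f := LinearMap.single A (fun _ : r ↦ A[X]) j) hgj
  rw [Submodule.map_smul''] at this
  exact Submodule.smul_mono le_rfl le_top this

variable [DecidableEq r]

lemma span_smul_top_le_polynomialAddProper {V : Matrix r n (MonicLocalization A)}
    {U : Matrix n r (MonicLocalization A)} (hVU : V * U = 1) {b : A[X]} {B : Matrix n r A[X]}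
    (hB : B.map ι = ι b • U) :
    (Ideal.span {b} • (⊤ : Submodule A[X] (r → A[X]))).restrictScalars A ≤
      polynomialAddProper V := by
  intro y hy
  rw [Submodule.restrictScalars_mem, Submodule.ideal_span_singleton_smul] at hy
  obtain ⟨x, -, rfl⟩ := hy
  cases nonempty_fintype r
  refine ⟨B *ᵥ x, fun i ↦ ?_⟩
  have hBx : ι ∘ (B *ᵥ x) = ι b • U *ᵥ (ι ∘ x) := by
    ext i
    rw [Function.comp_apply, RingHom.map_mulVec, hB, smul_mulVec]
  rw [hBx, mulVec_smul, mulVec_mulVec, hVU]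
  simp

lemma polynomialAddProper_sup_maximalIdeal_smul_top
    {V : Matrix r n (MonicLocalization A)} {V' : Matrix r n (ResidueField A)[X]}
    {U' : Matrix n r (ResidueField A)[X]} (hVU' : V' * U' = 1)
    (hV : V.map (monicLocalizationReduction A) = V'.map (algebraMap _ _)) :
    polynomialAddProper V ⊔ maximalIdeal A • ⊤ = ⊤ := by
  refine top_le_iff.mp fun y _ ↦ ?_
  cases nonempty_fintype r
  have hres := Polynomial.map_surjective (residue A) residue_surjective
  choose w hw using fun j ↦ hres ((U' *ᵥ (Polynomial.mapRingHom (residue A) ∘ y)) j)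
  have hδ (i) : monicLocalizationReduction A (ι (y i) - (V *ᵥ (ι ∘ w)) i) = 0 := by
    have hw : monicLocalizationReduction A ∘ ι ∘ w =
        algebraMap _ _ ∘ (U' *ᵥ (Polynomial.mapRingHom (residue A) ∘ y)) := by
      ext j
      simp [monicLocalizationReduction_algebraMap, hw]
    rw [map_sub, RingHom.map_mulVec, hV, hw, ← RingHom.map_mulVec, mulVec_mulVec, hVU', one_mulVec,
      monicLocalizationReduction_algebraMap, sub_eq_zero]
    rfl
  choose g hg hgδ using fun i ↦ exists_sub_mem_properFractions_of_reduction_eq_zero (hδ i)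
  rw [← sub_add_cancel y g]
  refine Submodule.add_mem_sup ⟨w, fun i ↦ ?_⟩ ?_
  · simpa [sub_right_comm] using hgδ i
  · exact mem_maximalIdeal_smul_top_of_map_residue_eq_zero hg

/-- On the closed fibre, `V` is a constant change of trivialization, so the bundle is trivial there
and the first cohomology vanishes; it vanishes over `A` by Nakayama's lemma. -/
lemma exists_mul_map_sub_one_mem_properFractions
    {V : Matrix r n (MonicLocalization A)} {U : Matrix n r (MonicLocalization A)} (hVU : V * U = 1)
    {V' : Matrix r n (ResidueField A)[X]} {U' : Matrix n r (ResidueField A)[X]} (hVU' : V' * U' = 1)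
    (hV : V.map (monicLocalizationReduction A) = V'.map (algebraMap _ _)) :
    ∃ W : Matrix n r A[X], ∀ i j, (V * W.map ι - 1 : Matrix r r _) i j ∈ properFractions A := by
  obtain ⟨b, hb, B, hB⟩ := exists_matrix_map_eq_smul_of_isLocalization (monicSubmonoid A) U
  have : Module.Finite A (A[X] ⧸ Ideal.span {b}) := Polynomial.Monic.finite_quotient hb
  have htop : polynomialAddProper V = ⊤ := eq_top_of_smul_top_le_of_sup_smul_top_eq_top
    (maximalIdeal_le_jacobson ⊥) (Ideal.span {b}) (span_smul_top_le_polynomialAddProper hVU hB)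
    (polynomialAddProper_sup_maximalIdeal_smul_top hVU' hV)
  have hmem (j : r) : Pi.single j 1 ∈ polynomialAddProper V := htop ▸ Submodule.mem_top
  choose w hw using hmem
  refine ⟨of fun i j ↦ w j i, fun i j ↦ ?_⟩
  convert neg_mem (hw j i) using 1
  rw [neg_sub, Matrix.sub_apply]
  obtain rfl | hij := eq_or_ne i j <;> simp [*, mulVec, mul_apply, dotProduct]

lemma exists_map_mul_sub_one_mem_properFractions
    {V : Matrix r n (MonicLocalization A)} {U : Matrix n r (MonicLocalization A)} (hVU : V * U = 1)
    {V' : Matrix r n (ResidueField A)[X]} {U' : Matrix n r (ResidueField A)[X]} (hVU' : V' * U' = 1)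
    (hU : U.map (monicLocalizationReduction A) = U'.map (algebraMap _ _)) :
    ∃ T : Matrix r n A[X], ∀ i j, (T.map ι * U - 1 : Matrix r r _) i j ∈ properFractions A := by
  obtain ⟨W, hW⟩ := exists_mul_map_sub_one_mem_properFractions (V := Uᵀ) (U := Vᵀ) (V' := U'ᵀ)
    (U' := V'ᵀ) (by rw [← transpose_mul, hVU, transpose_one])
    (by rw [← transpose_mul, hVU', transpose_one]) (by rw [transpose_map, hU, transpose_map])
  refine ⟨Wᵀ, fun i j ↦ ?_⟩
  have hWU : (Wᵀ.map ι * U - 1)ᵀ = Uᵀ * W.map ι - 1 := by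
    rw [transpose_sub, transpose_mul, transpose_map, transpose_transpose, transpose_one]
  exact (congrFun₂ hWU j i ▸ hW j i :)

end Vanishing

variable {A : Type*} [CommRing A] {m : Type*} [Fintype m]

local notation "ι" => algebraMap A[X] (MonicLocalization A)

lemma HasFreeRangeAway.map_monicLocalization {e : Matrix m m A[X]} {f : A[X]} (hf : f.Monic)
    (he : HasFreeRangeAway f e) : HasFreeRange (e.map ι) :=
  (he.map ι).hasFreeRange <|
    IsLocalization.map_units (MonicLocalization A) (⟨f, hf⟩ : monicSubmonoid A)

lemma eq_one_of_map_eq_mul [Nontrivial A] {r : Type*} [Fintype r] [DecidableEq r]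
    {G : Matrix r r A[X]} {P Q : Matrix r r (MonicLocalization A)}
    (hP : ∀ i j, (P - 1) i j ∈ properFractions A)
    (hQ : ∀ i j, (Q - 1) i j ∈ properFractions A) (hG : G.map ι = P * Q) : G = 1 := by
  refine sub_eq_zero.mp (Matrix.ext fun i j ↦ eq_zero_of_algebraMap_mem_properFractions ?_)
  have hsub : (G - 1).map ι = (P - 1) * (Q - 1) + (P - 1) + (Q - 1) := by
    rw [Matrix.map_sub _ (map_sub ι), hG, Matrix.map_one _ (map_zero ι) (map_one ι)]
    simp only [Matrix.sub_mul, Matrix.mul_sub, Matrix.one_mul, Matrix.mul_one]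
    abel
  rw [← Matrix.map_apply (f := ι), hsub, Matrix.add_apply, Matrix.add_apply, Matrix.mul_apply]
  exact add_mem (add_mem (sum_mem fun k _ ↦ mul_mem (hP i k) (hQ k j)) (hP i j)) (hQ i j)

lemma HasFreeRange.of_approximate_frame [IsLocalRing A] {e : Matrix m m A[X]}
    (he : IsIdempotentElem e) {r : ℕ} {U : Matrix m (Fin r) (MonicLocalization A)}
    {V : Matrix (Fin r) m (MonicLocalization A)} (hUV : U * V = e.map ι)
    {W : Matrix m (Fin r) A[X]} {T : Matrix (Fin r) m A[X]}
    (hW : ∀ i j, (V * W.map ι - 1 : Matrix (Fin r) (Fin r) _) i j ∈ properFractions A)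
    (hT : ∀ i j, (T.map ι * U - 1 : Matrix (Fin r) (Fin r) _) i j ∈ properFractions A) :
    HasFreeRange e := by
  have hTeW : T * e * W = 1 := eq_one_of_map_eq_mul hT hW <| by
    rw [Matrix.map_mul, Matrix.map_mul, ← hUV]
    simp only [Matrix.mul_assoc]
  have hVWTU : V * W.map ι * (T.map ι * U) = 1 := by
    rw [mul_eq_one_comm, ← Matrix.mul_assoc, Matrix.mul_assoc _ U, hUV, ← Matrix.map_mul,
      ← Matrix.map_mul, hTeW, Matrix.map_one _ (map_zero ι) (map_one ι)]
  refine ⟨r, e * W, T * e, ?_, ?_⟩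
  · apply Matrix.map_injective algebraMap_monicLocalization_injective
    beta_reduce
    calc (e * W * (T * e)).map ι = U * (V * W.map ι * (T.map ι * U)) * V := by
          rw [Matrix.map_mul, Matrix.map_mul, Matrix.map_mul, ← hUV]
          simp only [Matrix.mul_assoc]
      _ = e.map ι := by rw [hVWTU, Matrix.mul_one, hUV]
  · rw [Matrix.mul_assoc, ← Matrix.mul_assoc e, he.eq, ← Matrix.mul_assoc, hTeW]

lemma HasFreeRange.exists_frame_of_monicLocalization [IsLocalRing A] {e : Matrix m m A[X]}
    (he : IsIdempotentElem e) (h : HasFreeRange (e.map ι)) :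
    ∃ (r : ℕ) (U : Matrix m (Fin r) (MonicLocalization A))
      (V : Matrix (Fin r) m (MonicLocalization A)) (U' : Matrix m (Fin r) (ResidueField A)[X])
      (V' : Matrix (Fin r) m (ResidueField A)[X]),
      U * V = e.map ι ∧ V * U = 1 ∧ V' * U' = 1 ∧
        U.map (monicLocalizationReduction A) = U'.map (algebraMap _ _) ∧
        V.map (monicLocalizationReduction A) = V'.map (algebraMap _ _) := by
  let ψ := algebraMap (ResidueField A)[X] (RatFunc (ResidueField A))
  have he_reduction : (e.map ι).map (monicLocalizationReduction A) =
      (e.map (Polynomial.mapRingHom (residue A))).map ψ := by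
    ext i j
    exact monicLocalizationReduction_algebraMap (e i j)
  obtain ⟨r, U', V', hUV', hVU'⟩ :=
    (IsProjectiveFree.of_isPrincipalIdealRing (ResidueField A)[X]).hasFreeRange
      (isIdempotentElem_matrix_map he (Polynomial.mapRingHom (residue A)))
  have hUV'_map : U'.map ψ * V'.map ψ = (e.map ι).map (monicLocalizationReduction A) := by
    rw [← Matrix.map_mul, hUV', he_reduction]
  have hVU'_map : V'.map ψ * U'.map ψ = 1 := by
    rw [← Matrix.map_mul, hVU', Matrix.map_one _ (map_zero ψ) (map_one ψ)]
  obtain ⟨U, V, hUV, hVU, hU, hV⟩ := h.exists_lift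
    monicLocalizationReduction_units_surjective hUV'_map hVU'_map
  exact ⟨r, U, V, U', V', hUV, hVU, hVU', hU, hV⟩

/-- Horrocks' theorem over a local ring: a vector bundle on the affine line that extends to the
projective line is trivial. -/
lemma HasFreeRangeAway.hasFreeRange_of_monic [IsLocalRing A] {e : Matrix m m A[X]}
    (he : IsIdempotentElem e) {f : A[X]} (hf : f.Monic) (h : HasFreeRangeAway f e) :
    HasFreeRange e := by
  obtain ⟨r, U, V, U', V', hUV, hVU, hVU', hU, hV⟩ :=
    (h.map_monicLocalization hf).exists_frame_of_monicLocalization he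
  obtain ⟨W, hW⟩ := exists_mul_map_sub_one_mem_properFractions hVU hVU' hV
  obtain ⟨T, hT⟩ := exists_map_mul_sub_one_mem_properFractions hVU hVU' hU
  exact .of_approximate_frame he hUV hW hT

end LocalHorrocks

section Patching

open Matrix
open scoped Polynomial Polynomial.Bivariate

section Descent

variable {R S : Type*} [CommRing R] [CommRing S] [Algebra R S]

lemma exists_forall_comp_C_mul_X_mem_lifts (M : Submonoid R) [IsLocalization M S] {q : S[X]}
    (hq : q.coeff 0 ∈ Set.range (algebraMap R S)) :
    ∃ s ∈ M, ∀ t, s ∣ t →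
      q.comp (Polynomial.C (algebraMap R S t) * Polynomial.X) ∈
        Polynomial.lifts (algebraMap R S) := by
  obtain ⟨⟨s, hs⟩, h⟩ := IsLocalization.exist_integer_multiples M q.support q.coeff
  refine ⟨s, hs, ?_⟩
  rintro _ ⟨c, rfl⟩
  rw [Polynomial.lifts_iff_coeff_lifts]
  rintro (_ | i)
  · rwa [Polynomial.comp_C_mul_X_coeff, pow_zero, mul_one]
  rw [Polynomial.comp_C_mul_X_coeff]
  by_cases hi : q.coeff (i + 1) = 0
  · exact ⟨0, by simp [hi]⟩
  obtain ⟨a, ha⟩ := h (i + 1) (Polynomial.mem_support_iff.mpr hi)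
  refine ⟨a * (c * (s * c) ^ i), ?_⟩
  rw [map_mul, ha]
  simp only [Algebra.smul_def, map_mul, map_pow]
  ring

lemma exists_matrix_map_comp_C_mul_X_eq {m n : Type*} [Finite m] [Finite n] (M : Submonoid R)
    [IsLocalization M S] {Q : Matrix m n S[X]}
    (hQ : ∀ i j, (Q i j).coeff 0 ∈ Set.range (algebraMap R S)) :
    ∃ s ∈ M, ∀ t, s ∣ t → ∃ Q' : Matrix m n R[X],
      Q'.map (Polynomial.mapRingHom (algebraMap R S)) =
        Q.map (Polynomial.compRingHom (Polynomial.C (algebraMap R S t) * Polynomial.X)) := by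
  cases nonempty_fintype m
  cases nonempty_fintype n
  choose s hs hsQ using fun i j ↦ exists_forall_comp_C_mul_X_mem_lifts M (hQ i j)
  refine ⟨∏ i, ∏ j, s i j, prod_mem fun i _ ↦ prod_mem fun j _ ↦ hs i j, fun t ht ↦ ?_⟩
  have hst (i j) : s i j ∣ t := ((Finset.dvd_prod_of_mem (s i) (Finset.mem_univ j)).trans
    (Finset.dvd_prod_of_mem (fun i ↦ ∏ j, s i j) (Finset.mem_univ i))).trans ht
  choose Q' hQ' using fun i j ↦ (Polynomial.mem_lifts _).mp (hsQ i j t (hst i j))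
  exact ⟨of Q', Matrix.ext fun i j ↦ hQ' i j⟩

end Descent

section QuillenIdeal

variable {A : Type*} [CommRing A] {m : Type*} [Fintype m] {e : Matrix m m A[X]}

lemma IdempotentEquiv.map_aeval_add_smul {s : A}
    (h : IdempotentEquiv
      (e.map (Polynomial.aeval (R := A) (Polynomial.C Polynomial.X + s • Y : A[X][Y])))
      (e.map (Polynomial.aeval (R := A) (Polynomial.C Polynomial.X : A[X][Y]))))
    {R : Type*} [CommRing R] [Algebra A R] (x y : R) :
    IdempotentEquiv (e.map (Polynomial.aeval (R := A) (x + s • y)))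
      (e.map (Polynomial.aeval x)) := by
  have hcomp (z : A[X][Y]) : (Polynomial.aevalAeval x y).comp (Polynomial.aeval (R := A) z) =
        Polynomial.aeval (z.aevalAeval x y) :=
    Polynomial.algHom_ext (by simp)
  have h := h.map (Polynomial.aevalAeval x y).toRingHom
  simp only [Matrix.map_map, AlgHom.toRingHom_eq_coe, RingHom.coe_coe, ← AlgHom.coe_comp] at h
  rw [hcomp, hcomp, map_add, map_smul, Polynomial.aevalAeval_X, Polynomial.aevalAeval_Y] at h
  exact h

/-- The ideal of Quillen's patching theorem: those `s` for which the bundle given by `e` is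
isomorphic to its translate by `s • Y`. -/
def quillenIdeal (he : IsIdempotentElem e) : Ideal A where
  carrier := {s | IdempotentEquiv
      (e.map (Polynomial.aeval (R := A) (Polynomial.C Polynomial.X + s • Y : A[X][Y])))
      (e.map (Polynomial.aeval (R := A) (Polynomial.C Polynomial.X : A[X][Y])))}
  zero_mem' := by
    rw [Set.mem_ofPred_eq, zero_smul, add_zero]
    exact .refl (isIdempotentElem_matrix_map he (Polynomial.aeval _).toRingHom)
  add_mem' {s t} hs ht := by
    rw [Set.mem_ofPred_eq, add_smul, ← add_assoc]
    exact .trans (isIdempotentElem_matrix_map he (Polynomial.aeval _).toRingHom)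
      (isIdempotentElem_matrix_map he (Polynomial.aeval _).toRingHom)
      (ht.map_aeval_add_smul _ _) hs
  smul_mem' c s hs := by
    rw [Set.mem_ofPred_eq, smul_eq_mul, mul_comm, mul_smul]
    exact hs.map_aeval_add_smul _ _

lemma idempotentEquiv_map_C_eval_zero_of_quillenIdeal_eq_top {he : IsIdempotentElem e}
    (h : quillenIdeal he = ⊤) :
    IdempotentEquiv e ((e.map (Polynomial.eval 0)).map Polynomial.C) := by
  have h : (1 : A) ∈ quillenIdeal he := h ▸ Submodule.mem_top
  have h := IdempotentEquiv.map_aeval_add_smul h (0 : A[X]) Polynomial.X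
  have hX : e.map (Polynomial.aeval (R := A) (0 + (1 : A) • Polynomial.X : A[X])) = e :=
    Matrix.ext fun i j ↦ by simp
  have h0 : e.map (Polynomial.aeval (0 : A[X])) = (e.map (Polynomial.eval 0)).map Polynomial.C :=
    Matrix.ext fun i j ↦ by
      simpa using Polynomial.aeval_algebraMap_apply A[X] (0 : A) (e i j)
  rwa [hX, h0] at h

lemma HasFreeRange.exists_translation {B : Type*} [CommRing B] {e : Matrix m m B[X]}
    (h : HasFreeRange e) :
    ∃ P Q : Matrix m m B[X][Y],
      P * Q = e.map (Polynomial.aeval (R := B) (Polynomial.C Polynomial.X + Y : B[X][Y])) ∧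
      Q * P = e.map (Polynomial.C) ∧
      (∀ i j, (P i j).coeff 0 = e i j) ∧ ∀ i j, (Q i j).coeff 0 = e i j := by
  obtain ⟨r, U, V, rfl, hVU⟩ := h
  let σ : B[X] →+* B[X][Y] :=
    (Polynomial.aeval (R := B) (Polynomial.C Polynomial.X + Y : B[X][Y])).toRingHom
  let τ : B[X] →+* B[X][Y] := Polynomial.C
  have hσ : Polynomial.constantCoeff.comp σ = RingHom.id _ :=
    Polynomial.ringHom_ext (by simp [σ]) (by simp [σ])
  have hσ (p) : (σ p).coeff 0 = p := RingHom.congr_fun hσ p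
  refine ⟨U.map σ * V.map τ, U.map τ * V.map σ, ?_, ?_, fun i j ↦ ?_, fun i j ↦ ?_⟩
  · rw [Matrix.mul_assoc, ← Matrix.mul_assoc (V.map τ), ← Matrix.map_mul, hVU,
      Matrix.map_one _ (map_zero τ) (map_one τ), Matrix.one_mul, ← Matrix.map_mul]
    rfl
  · rw [Matrix.mul_assoc, ← Matrix.mul_assoc (V.map σ), ← Matrix.map_mul, hVU,
      Matrix.map_one _ (map_zero σ) (map_one σ), Matrix.one_mul, ← Matrix.map_mul]
  · simp [Matrix.mul_apply, Polynomial.finsetSum_coeff, Polynomial.mul_coeff_zero, hσ, τ]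
  · simp [Matrix.mul_apply, Polynomial.finsetSum_coeff, Polynomial.mul_coeff_zero, hσ, τ]

attribute [local instance] Polynomial.algebra Polynomial.isLocalization in
lemma exists_mem_quillenIdeal (he : IsIdempotentElem e) {B : Type*} [CommRing B] [Algebra A B]
    (M : Submonoid A) [IsLocalization M B] (hM : M ≤ nonZeroDivisors A)
    (h : HasFreeRange (e.map (Polynomial.mapRingHom (algebraMap A B)))) :
    ∃ s ∈ M, s ∈ quillenIdeal he := by
  obtain ⟨P, Q, hPQ, hQP, hP, hQ⟩ := h.exists_translation
  obtain ⟨_, ⟨s, hs, rfl⟩, hsP⟩ := exists_matrix_map_comp_C_mul_X_eq (R := A[X])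
    (M.map Polynomial.C) fun i j ↦ ⟨e i j, (hP i j).symm⟩
  obtain ⟨_, ⟨t, ht, rfl⟩, htQ⟩ := exists_matrix_map_comp_C_mul_X_eq (R := A[X])
    (M.map Polynomial.C) fun i j ↦ ⟨e i j, (hQ i j).symm⟩
  obtain ⟨P', hP'⟩ := hsP (Polynomial.C (s * t)) (map_dvd _ (dvd_mul_right s t))
  obtain ⟨Q', hQ'⟩ := htQ (Polynomial.C (s * t)) (map_dvd _ (dvd_mul_left t s))
  let φ := algebraMap A[X] B[X]
  let χ := Polynomial.compRingHom (Polynomial.C (φ (Polynomial.C (s * t))) * Y : B[X][Y])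
  have hφ : Function.Injective (Polynomial.mapRingHom φ) :=
    Polynomial.map_injective _ (Polynomial.map_injective _ (IsLocalization.injective B hM))
  have htranslate : (Polynomial.mapRingHom φ).comp (Polynomial.aeval (R := A)
        (Polynomial.C Polynomial.X + (s * t) • Y : A[X][Y])).toRingHom =
      χ.comp ((Polynomial.aeval (R := B)
        (Polynomial.C Polynomial.X + Y : B[X][Y])).toRingHom.comp φ) :=
    Polynomial.ringHom_ext (by simp [χ, φ]) (by simp [χ, φ, Algebra.smul_def])
  have hconst : (Polynomial.mapRingHom φ).comp
        (Polynomial.aeval (R := A) (Polynomial.C Polynomial.X : A[X][Y])).toRingHom =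
      χ.comp (Polynomial.C.comp φ) :=
    Polynomial.ringHom_ext (by simp [χ, φ]) (by simp [χ, φ])
  refine ⟨s * t, mul_mem hs ht, P', Q', Matrix.map_injective hφ ?_, Matrix.map_injective hφ ?_⟩
  · calc (P' * Q').map (Polynomial.mapRingHom φ) = (P * Q).map χ := by
          rw [Matrix.map_mul, hP', hQ', Matrix.map_mul]
      _ = e.map (χ.comp ((Polynomial.aeval (R := B) _).toRingHom.comp φ)) := by rw [hPQ]; rfl
      _ = _ := by rw [← htranslate]; rfl
  · calc (Q' * P').map (Polynomial.mapRingHom φ) = (Q * P).map χ := by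
          rw [Matrix.map_mul, hP', hQ', Matrix.map_mul]
      _ = e.map (χ.comp (Polynomial.C.comp φ)) := by rw [hQP]; rfl
      _ = _ := by rw [← hconst]; rfl

end QuillenIdeal

end Patching

section AffineHorrocks

open scoped Polynomial

variable {A : Type*} [CommRing A] [IsDomain A] {m : Type*} [Fintype m] {e : Matrix m m A[X]}
  {f : A[X]}

lemma HasFreeRangeAway.quillenIdeal_eq_top (he : IsIdempotentElem e) (hf : f.Monic)
    (h : HasFreeRangeAway f e) : quillenIdeal he = ⊤ := by
  by_contra hne
  obtain ⟨p, _, hp⟩ := Ideal.exists_le_maximal _ hne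
  let φ := Polynomial.mapRingHom (algebraMap A (Localization.AtPrime p))
  obtain ⟨s, hs, hsQ⟩ := exists_mem_quillenIdeal he p.primeCompl p.primeCompl_le_nonZeroDivisors <|
    (h.map φ).hasFreeRange_of_monic (isIdempotentElem_matrix_map he φ) (hf.map _)
  exact hs (hp hsQ)

lemma HasFreeRangeAway.hasFreeRange_of_monic_of_isProjectiveFree (hA : IsProjectiveFree A)
    (he : IsIdempotentElem e) (hf : f.Monic) (h : HasFreeRangeAway f e) : HasFreeRange e :=
  .of_idempotentEquiv he
    (idempotentEquiv_map_C_eval_zero_of_quillenIdeal_eq_top (h.quillenIdeal_eq_top he hf)) <|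
    (hA.hasFreeRange (isIdempotentElem_matrix_map he (Polynomial.evalRingHom 0))).map Polynomial.C

end AffineHorrocks

section Gluing

open Matrix

variable {R S : Type*} [CommRing R] [CommRing S] {m : Type*} [Fintype m]

lemma matrix_map_smul {p q : Type*} (φ : R →+* S) (c : R) (N : Matrix p q R) :
    (c • N).map φ = φ c • N.map φ :=
  Matrix.map_smulₛₗ φ φ c (map_mul φ c) N

lemma HasFreeRangeAway.exists_mul_eq_self {f : R} (hf : f ∈ nonZeroDivisors R)
    {e : Matrix m m R} (h : HasFreeRangeAway f e) :
    ∃ (r : ℕ) (U : Matrix m (Fin r) R) (V : Matrix (Fin r) m R),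
      U * V = f • e ∧ V * U = f • 1 ∧ e * U = U ∧ V * e = V := by
  obtain ⟨r, U, V, hUV, hVU⟩ := h
  have hf : IsSMulRegular R f := (isRegular_iff_mem_nonZeroDivisors.mpr hf).left
  refine ⟨r, U, V, hUV, hVU, hf.matrix ?_, hf.matrix ?_⟩ <;> beta_reduce
  · rw [← Matrix.smul_mul, ← hUV, Matrix.mul_assoc, hVU, Matrix.mul_smul, Matrix.mul_one]
  · rw [← Matrix.mul_smul, ← hUV, ← Matrix.mul_assoc, hVU, Matrix.smul_mul, Matrix.one_mul]

/-- For `S = R[1/d]`, this glues the image of `e`, which is free over `R[1/(df)]`, with a free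
module over `R[1/f]`. With `a * d ^ 2 + b * f ^ 2 = 1`, the matrices `A` and `B` below satisfy
`A * B = e`, whereas `B * A` has its entries in `R`. -/
lemma exists_isIdempotentElem_hasFreeRangeAway_idempotentEquiv_map {φ : R →+* S}
    (hφ : Function.Injective φ) {d f : R} (hdf : IsCoprime d f) {e : Matrix m m S}
    (he : IsIdempotentElem e) {r : ℕ} {U : Matrix m (Fin r) S} {V : Matrix (Fin r) m S}
    (hUV : U * V = φ f • e) (hVU : V * U = φ f • 1) (heU : e * U = U) (hVe : V * e = V)
    {e₁ : Matrix m m R} {U₁ : Matrix m (Fin r) R} {V₁ : Matrix (Fin r) m R}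
    (he₁ : e₁.map φ = φ d • e) (hU₁ : U₁.map φ = φ d • U) (hV₁ : V₁.map φ = φ d • V) :
    ∃ E : Matrix (m ⊕ Fin r) (m ⊕ Fin r) R,
      IsIdempotentElem E ∧ HasFreeRangeAway f E ∧ IdempotentEquiv e (E.map φ) := by
  obtain ⟨a, b, hab⟩ : IsCoprime (d ^ 2) (f ^ 2) := hdf.pow
  have hab : φ a * φ d ^ 2 + φ b * φ f ^ 2 = 1 := by simpa using congrArg φ hab
  have hone : (1 : Matrix (Fin r) (Fin r) R).map φ = 1 := Matrix.map_one _ (map_zero φ) (map_one φ)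
  let A := fromCols (φ d • e) (φ f • U)
  let B := fromRows ((φ a * φ d) • e) (φ b • V)
  let E := fromBlocks ((a * d) • e₁) ((a * f) • U₁) (b • V₁) ((b * f ^ 2) • 1)
  have hAB : A * B = e := by
    simp only [A, B, fromCols_mul_fromRows, Matrix.smul_mul, Matrix.mul_smul, he.eq, hUV,
      smul_smul, ← add_smul]
    convert one_smul S e
    linear_combination hab
  have hBA : B * A = E.map φ := by
    simp only [A, B, E, fromRows_mul_fromCols, Matrix.smul_mul, Matrix.mul_smul, he.eq, heU, hVe,
      hVU, smul_smul, fromBlocks_map, matrix_map_smul, he₁, hU₁, hV₁, hone, map_mul, map_pow]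
    congr 2 <;> ring
  have heA : e * A = A := by simp only [A, mul_fromCols, Matrix.mul_smul, he.eq, heU]
  let U₂ := fromRows (a • U₁) ((b * f) • (1 : Matrix (Fin r) (Fin r) R))
  let V₂ := fromCols V₁ ((f ^ 2) • (1 : Matrix (Fin r) (Fin r) R))
  have hU₂ : U₂.map φ = B * U := by
    simp only [U₂, B, fromRows_map, fromRows_mul, matrix_map_smul, hU₁, Matrix.smul_mul, heU, hVU,
      smul_smul, hone, map_mul]
  have hV₂ : V₂.map φ = V * A := by
    simp only [V₂, A, fromCols_map, mul_fromCols, matrix_map_smul, hV₁, Matrix.mul_smul, hVe, hVU,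
      smul_smul, hone, map_mul, pow_two]
  refine ⟨E, Matrix.map_injective hφ ?_, ⟨r, U₂, V₂, Matrix.map_injective hφ ?_,
    Matrix.map_injective hφ ?_⟩, A, B, hAB, hBA⟩ <;> beta_reduce
  · rw [Matrix.map_mul, ← hBA, Matrix.mul_assoc, ← Matrix.mul_assoc A, hAB, heA]
  · rw [Matrix.map_mul, hU₂, hV₂, matrix_map_smul, ← hBA, Matrix.mul_assoc, ← Matrix.mul_assoc U,
      hUV, Matrix.smul_mul, heA, Matrix.mul_smul]
  · rw [Matrix.map_mul, hU₂, hV₂, matrix_map_smul, Matrix.mul_assoc, ← Matrix.mul_assoc A, hAB, heU,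
      hVU, hone]

lemma HasFreeRangeAway.exists_isIdempotentElem_of_isCoprime [Algebra R S] {x f : R}
    [IsLocalization.Away x S] (hx : x ∈ nonZeroDivisors R) (hf : f ∈ nonZeroDivisors R)
    (hxf : IsCoprime x f)
    {e : Matrix m m S} (he : IsIdempotentElem e) (h : HasFreeRangeAway (algebraMap R S f) e) :
    ∃ (r : ℕ) (E : Matrix (m ⊕ Fin r) (m ⊕ Fin r) R), IsIdempotentElem E ∧
      HasFreeRangeAway f E ∧ IdempotentEquiv e (E.map (algebraMap R S)) := by
  obtain ⟨r, U, V, hUV, hVU, heU, hVe⟩ := h.exists_mul_eq_self <|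
    IsLocalization.map_nonZeroDivisors_le (.powers x) S (Submonoid.mem_map_of_mem _ hf)
  obtain ⟨_, ⟨n, rfl⟩, W, hW⟩ := exists_matrix_map_eq_smul_of_isLocalization
    (Submonoid.powers x) (fromBlocks e U V 0)
  exact ⟨r, exists_isIdempotentElem_hasFreeRangeAway_idempotentEquiv_map
    (IsLocalization.injective S (Submonoid.powers_le.mpr hx)) hxf.pow_left he hUV hVU heU hVe
    (congrArg toBlocks₁₁ hW) (congrArg toBlocks₁₂ hW) (congrArg toBlocks₂₁ hW)⟩

end Gluing

section PolynomialRings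

open scoped Polynomial TensorProduct LaurentPolynomial

attribute [local instance] Polynomial.algebra

variable {k A : Type*} [Field k] [CommRing A] [Algebra k A]

lemma IsProjectiveFree.localization_algebraMapSubmonoid_polynomial
    (h : IsProjectiveFree (FractionRing k[X] ⊗[k] A)) :
    IsProjectiveFree (Localization (Algebra.algebraMapSubmonoid A[X] (nonZeroDivisors k[X]))) := by
  let K := FractionRing k[X]
  let B := Localization (Algebra.algebraMapSubmonoid A[X] (nonZeroDivisors k[X]))
  have : IsScalarTower k k[X] B := .to₁₂₄ k k[X] A[X] B
  have : IsScalarTower k K B := .to₁₃₄ k k[X] K B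
  have hX : Algebra.IsPushout k[X] A[X] K B :=
    Algebra.isPushout_of_isLocalization (nonZeroDivisors k[X]) K A[X] B
  have : Algebra.IsPushout k K A B :=
    (Algebra.IsPushout.comp_iff k k[X] A A[X]).mpr hX.symm
  exact h.of_ringEquiv (Algebra.IsPushout.equiv k K A B).toRingEquiv

lemma exists_monic_hasFreeRangeAway_map [IsDomain A]
    (h : IsProjectiveFree (FractionRing k[X] ⊗[k] A)) {R : Type*} [CommRing R] [Algebra A[X] R]
    (M : Submonoid A[X]) [IsLocalization M R]
    (hM : M ≤ Algebra.algebraMapSubmonoid A[X] (nonZeroDivisors k[X]))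
    {m : Type*} [Fintype m] {e : Matrix m m R} (he : IsIdempotentElem e) :
    ∃ f : k[X], f.Monic ∧ HasFreeRangeAway (algebraMap A[X] R (f.map (algebraMap k A))) e := by
  classical
  let N := Algebra.algebraMapSubmonoid A[X] (nonZeroDivisors k[X])
  have hN : N ≤ nonZeroDivisors A[X] :=
    map_le_nonZeroDivisors_of_injective _
      (Polynomial.map_injective _ (algebraMap k A).injective) le_rfl
  let B := Localization N
  let ψ : R →+* B := IsLocalization.lift (M := M) fun s ↦
    IsLocalization.map_units B (⟨s, hM s.2⟩ : N)
  let _ : Algebra R B := ψ.toAlgebra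
  have : IsScalarTower A[X] R B := .of_algebraMap_eq fun x ↦ (IsLocalization.lift_eq _ x).symm
  have : IsLocalization (N.map (algebraMap A[X] R)) B :=
    IsLocalization.isLocalization_of_submonoid_le R B M N hM
  obtain ⟨_, ⟨_, ⟨f, hf, rfl⟩, rfl⟩, hfe⟩ := HasFreeRange.exists_hasFreeRangeAway (S := B)
    (N.map (algebraMap A[X] R))
    ((Submonoid.monotone_map hN).trans (IsLocalization.map_nonZeroDivisors_le M R))
    (h.localization_algebraMapSubmonoid_polynomial.hasFreeRange (isIdempotentElem_matrix_map he _))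
  obtain ⟨u, hu⟩ := normalize_associated f
  refine ⟨normalize f, Polynomial.monic_normalize (nonZeroDivisors.ne_zero hf), ?_⟩
  rw [← hu, mul_comm, map_mul, map_mul] at hfe
  exact hfe.of_isUnit_mul ((u.isUnit.map _).map _)

theorem IsProjectiveFree.polynomial [IsDomain A] (hA : IsProjectiveFree A)
    (hK : IsProjectiveFree (FractionRing k[X] ⊗[k] A)) : IsProjectiveFree A[X] := by
  intro n e he
  have : IsLocalization (⊥ : Submonoid A[X]) A[X] := IsLocalization.self bot_le
  obtain ⟨f, hf, hfe⟩ := exists_monic_hasFreeRangeAway_map hK ⊥ bot_le he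
  exact hfe.hasFreeRange_of_monic_of_isProjectiveFree hA he (hf.map _)

theorem IsProjectiveFree.laurentPolynomial [IsDomain A] (hA : IsProjectiveFree A)
    (hK : IsProjectiveFree (FractionRing k[X] ⊗[k] A)) : IsProjectiveFree A[T;T⁻¹] := by
  intro n e he
  obtain ⟨f, hf, hfe⟩ := exists_monic_hasFreeRangeAway_map hK
    (Submonoid.powers (Polynomial.X : A[X]))
    (Submonoid.powers_le.mpr ⟨Polynomial.X, by simp, by simp⟩) he
  obtain ⟨g, hfg, hXg⟩ := f.exists_eq_pow_rootMultiplicity_mul_and_not_dvd hf.ne_zero 0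
  rw [Polynomial.C_0, sub_zero] at hfg hXg
  have hg : g.Monic := (Polynomial.monic_X_pow _).of_mul_monic_left (hfg ▸ hf)
  have hcop : IsCoprime (Polynomial.X : A[X]) (g.map (algebraMap k A)) := by
    simpa using (Polynomial.irreducible_X.coprime_iff_not_dvd.mpr hXg).map
      (Polynomial.mapRingHom (algebraMap k A))
  have hge : HasFreeRangeAway (algebraMap A[X] A[T;T⁻¹] (g.map (algebraMap k A))) e := by
    rw [hfg, Polynomial.map_mul, map_mul] at hfe
    refine hfe.of_isUnit_mul ?_
    simpa using ((LaurentPolynomial.isUnit_T 1).pow _)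
  obtain ⟨r, E, hE, hgE, heE⟩ := hge.exists_isIdempotentElem_of_isCoprime
    (mem_nonZeroDivisors_of_ne_zero Polynomial.X_ne_zero)
    (hg.map _).mem_nonZeroDivisors hcop he
  exact .of_idempotentEquiv he heE <|
    (hgE.hasFreeRange_of_monic_of_isProjectiveFree hA hE (hg.map _)).map _

end PolynomialRings

section MonoidAlgebras

open scoped Polynomial TensorProduct LaurentPolynomial

universe u

/-- The monoid algebras `k[G]` over all fields `k` in universe `u` are projective free. Adjoining a
variable to `k[G]` involves `k(X)[G]`, so an induction on `G` has to range over all fields. -/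
def HasProjectiveFreeAlgebras (G : Type*) [AddCommMonoid G] : Prop :=
  ∀ (k : Type u) [Field k], IsProjectiveFree (AddMonoidAlgebra k G)

namespace HasProjectiveFreeAlgebras

variable {G H : Type*} [AddCommMonoid G] [AddCommMonoid H]

lemma of_addEquiv (h : HasProjectiveFreeAlgebras.{u} G) (σ : G ≃+ H) :
    HasProjectiveFreeAlgebras.{u} H :=
  fun k _ ↦ (h k).of_ringEquiv (AddMonoidAlgebra.mapDomainRingEquiv k σ)

lemma tensorProduct (h : HasProjectiveFreeAlgebras.{u} G) (k K : Type u) [Field k] [Field K]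
    [Algebra k K] : IsProjectiveFree (K ⊗[k] AddMonoidAlgebra k G) :=
  (h K).of_ringEquiv (AddMonoidAlgebra.scalarTensorEquiv (M := G) k K).symm.toRingEquiv

lemma nat_prod [UniqueSums G] (h : HasProjectiveFreeAlgebras.{u} G) :
    HasProjectiveFreeAlgebras.{u} (ℕ × G) := fun k _ ↦
  have : IsDomain (AddMonoidAlgebra k G) := NoZeroDivisors.to_isDomain _
  ((h k).polynomial (h.tensorProduct k (FractionRing k[X]))).of_ringEquiv <|
    (Polynomial.toFinsuppIso _).trans AddMonoidAlgebra.curryRingEquiv.symm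

lemma int_prod [UniqueSums G] (h : HasProjectiveFreeAlgebras.{u} G) :
    HasProjectiveFreeAlgebras.{u} (ℤ × G) := fun k _ ↦
  have : IsDomain (AddMonoidAlgebra k G) := NoZeroDivisors.to_isDomain _
  ((h k).laurentPolynomial (h.tensorProduct k (FractionRing k[X]))).of_ringEquiv
    AddMonoidAlgebra.curryRingEquiv.symm

end HasProjectiveFreeAlgebras

/-- `Fin.consEquiv` for constant families, as an additive equivalence. -/
def finConsAddEquiv (M : Type*) [AddCommMonoid M] (n : ℕ) :
    M × (Fin n → M) ≃+ (Fin (n + 1) → M) where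
  __ := Fin.consEquiv fun _ ↦ M
  map_add' x y := by ext i; cases i using Fin.cases <;> simp [Fin.consEquiv]

lemma hasProjectiveFreeAlgebras_pi_nat (b : ℕ) : HasProjectiveFreeAlgebras.{u} (Fin b → ℕ) := by
  induction b with
  | zero =>
    exact fun k _ ↦ (IsProjectiveFree.of_isPrincipalIdealRing k).of_ringEquiv
      (AddMonoidAlgebra.uniqueRingEquiv (Fin 0 → ℕ)).symm
  | succ b ih => exact ih.nat_prod.of_addEquiv (finConsAddEquiv ℕ b)

theorem hasProjectiveFreeAlgebras_pi_int_prod_pi_nat (a b : ℕ) :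
    HasProjectiveFreeAlgebras.{u} ((Fin a → ℤ) × (Fin b → ℕ)) := by
  induction a with
  | zero => exact (hasProjectiveFreeAlgebras_pi_nat b).of_addEquiv AddEquiv.uniqueProd.symm
  | succ a ih => exact ih.int_prod.of_addEquiv <|
      AddEquiv.prodAssoc.symm.trans ((finConsAddEquiv ℤ a).prodCongr (.refl _))

end MonoidAlgebras

section MixedLaurentPolynomials

variable (k : Type*) [CommRing k] (σ τ : Type*)

/-- The exponents of a monomial in variables `σ ⊕ τ`, those of the variables in `σ` being regarded
as integers. -/
def mixedExponent : ((σ ⊕ τ) →₀ ℕ) →+ (σ → ℤ) × (τ → ℕ) where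
  toFun m := (fun i ↦ m (.inl i), fun j ↦ m (.inr j))
  map_zero' := by ext <;> simp
  map_add' x y := by ext <;> simp

/-- The inclusion of `k[x, y]` into `k[x, x⁻¹, y]`, the latter modelled as the monoid algebra of
`ℤ^σ × ℕ^τ`. -/
noncomputable def mixedLaurentHom :
    MvPolynomial (σ ⊕ τ) k →+* AddMonoidAlgebra k ((σ → ℤ) × (τ → ℕ)) :=
  AddMonoidAlgebra.mapDomainRingHom k (mixedExponent σ τ)

lemma mixedLaurentHom_monomial (m : (σ ⊕ τ) →₀ ℕ) (c : k) :
    mixedLaurentHom k σ τ (monomial m c) = .single (mixedExponent σ τ m) c :=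
  AddMonoidAlgebra.mapDomain_single ..

variable {k σ τ}

lemma mixedExponent_injective : Function.Injective (mixedExponent σ τ) := by
  intro x y h
  obtain ⟨hσ, hτ⟩ := Prod.ext_iff.mp h
  ext (i | j)
  · exact Int.ofNat_injective (congrFun hσ i)
  · exact congrFun hτ j

lemma mixedLaurentHom_injective : Function.Injective (mixedLaurentHom k σ τ) :=
  AddMonoidAlgebra.mapDomain_injective mixedExponent_injective

lemma isUnit_mixedLaurentHom_X_inl (i : σ) : IsUnit (mixedLaurentHom k σ τ (X (.inl i))) := by
  let g := mixedExponent σ τ (Finsupp.single (.inl i) 1)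
  have hg : g + (-g.1, 0) = 0 := by ext j <;> simp [g, mixedExponent]
  refine .of_mul_eq_one (AddMonoidAlgebra.single (-g.1, 0) 1) ?_
  rw [X, mixedLaurentHom_monomial, AddMonoidAlgebra.single_mul_single, hg, one_mul,
    AddMonoidAlgebra.one_def]

lemma monomial_mapDomain_mem_closure_range_X {υ : Type*} (f : σ → υ) (n : σ →₀ ℕ) :
    monomial (n.mapDomain f) (1 : k) ∈ Submonoid.closure (Set.range fun i ↦ X (f i)) := by
  induction n using Finsupp.induction_linear with
  | zero => simp
  | add x y hx hy =>
    rw [Finsupp.mapDomain_add, ← one_mul (1 : k), ← monomial_mul]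
    exact mul_mem hx hy
  | single i j =>
    rw [Finsupp.mapDomain_single, ← X_pow_eq_monomial]
    exact pow_mem (Submonoid.subset_closure (Set.mem_range_self i)) j

variable [Finite σ] [Finite τ]

lemma exists_mixedExponent_eq_add (g : (σ → ℤ) × (τ → ℕ)) : ∃ (m : (σ ⊕ τ) →₀ ℕ) (n : σ →₀ ℕ),
    mixedExponent σ τ m = g + mixedExponent σ τ (n.mapDomain .inl) := by
  refine ⟨Finsupp.equivFunOnFinite.symm (Sum.elim (fun i ↦ (g.1 i).toNat) g.2),
    Finsupp.equivFunOnFinite.symm fun i ↦ (-g.1 i).toNat, ?_⟩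
  ext i
  · simp only [mixedExponent, AddMonoidHom.coe_mk, ZeroHom.coe_mk, Prod.fst_add, Pi.add_apply,
      Finsupp.equivFunOnFinite_symm_apply_apply, Sum.elim_inl, Sum.elim_inr, Int.ofNat_toNat,
      Finsupp.mapDomain_apply Sum.inl_injective]
    omega
  · simp [mixedExponent, Finsupp.mapDomain_of_notMem_range]

lemma exists_mixedLaurentHom_eq_mul (z : AddMonoidAlgebra k ((σ → ℤ) × (τ → ℕ))) :
    ∃ s ∈ Submonoid.closure (Set.range fun i : σ ↦ (X (.inl i) : MvPolynomial (σ ⊕ τ) k)), ∃ p,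
      z * mixedLaurentHom k σ τ s = mixedLaurentHom k σ τ p := by
  induction z using AddMonoidAlgebra.induction_linear with
  | zero => exact ⟨1, one_mem _, 0, by simp⟩
  | add x y hx hy =>
    obtain ⟨s, hs, p, hp⟩ := hx
    obtain ⟨t, ht, q, hq⟩ := hy
    refine ⟨s * t, mul_mem hs ht, p * t + q * s, ?_⟩
    simp only [map_add, map_mul, ← hp, ← hq]
    ring
  | single g c =>
    obtain ⟨m, n, hmn⟩ := exists_mixedExponent_eq_add g
    refine ⟨_, monomial_mapDomain_mem_closure_range_X _ n, monomial m c, ?_⟩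
    rw [mixedLaurentHom_monomial, mixedLaurentHom_monomial, AddMonoidAlgebra.single_mul_single,
      mul_one, hmn]

variable (k σ τ)

theorem isLocalization_mixedLaurentHom :
    letI := (mixedLaurentHom k σ τ).toAlgebra
    IsLocalization
      (Submonoid.closure (Set.range fun i : σ ↦ (X (.inl i) : MvPolynomial (σ ⊕ τ) k)))
      (AddMonoidAlgebra k ((σ → ℤ) × (τ → ℕ))) := by
  let _ := (mixedLaurentHom k σ τ).toAlgebra
  let U := (IsUnit.submonoid (AddMonoidAlgebra k ((σ → ℤ) × (τ → ℕ)))).comap (mixedLaurentHom k σ τ)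
  have hU : Submonoid.closure (Set.range fun i : σ ↦ (X (.inl i) : MvPolynomial (σ ⊕ τ) k)) ≤ U :=
    Submonoid.closure_le.mpr (Set.range_subset_iff.mpr isUnit_mixedLaurentHom_X_inl)
  refine ⟨fun s ↦ hU s.2, fun z ↦ ?_, fun h ↦ ⟨1, by rw [mixedLaurentHom_injective h]⟩⟩
  obtain ⟨s, hs, p, hp⟩ := exists_mixedLaurentHom_eq_mul z
  exact ⟨(p, ⟨s, hs⟩), hp⟩

end MixedLaurentPolynomials

/-- Every finitely generated projective module over the mixed Laurent polynomial
ring `k[x₁^{±1}, …, x_a^{±1}, y₁, …, y_b]` over a field `k` — i.e. the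
localization of `k[x₁, …, x_a, y₁, …, y_b]` at the multiplicative set generated
by `x₁, …, x_a` — is free (Swan's extension of Quillen–Suslin). -/
theorem projective_module_over_mixed_laurent_ring_free
    (k : Type*) [Field k] (a b : ℕ)
    (R : Type*) [CommRing R] [Algebra (MvPolynomial (Fin a ⊕ Fin b) k) R]
    [IsLocalization
      (Submonoid.closure
        (Set.range (fun i : Fin a =>
          (X (Sum.inl i) : MvPolynomial (Fin a ⊕ Fin b) k)))) R]
    (P : Type*) [AddCommGroup P] [Module R P]
    [Module.Finite R P] [Module.Projective R P] :
    Module.Free R P := by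
  let M := Submonoid.closure
    (Set.range fun i : Fin a ↦ (X (.inl i) : MvPolynomial (Fin a ⊕ Fin b) k))
  let L := AddMonoidAlgebra k ((Fin a → ℤ) × (Fin b → ℕ))
  let _ : Algebra _ L := (mixedLaurentHom k (Fin a) (Fin b)).toAlgebra
  have : IsLocalization M L := isLocalization_mixedLaurentHom k (Fin a) (Fin b)
  have hL : IsProjectiveFree L := hasProjectiveFreeAlgebras_pi_int_prod_pi_nat a b k
  have hR : IsProjectiveFree R := hL.of_ringEquiv (IsLocalization.algEquiv M L R).toRingEquiv
  exact hR.free P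
end

section
/- Let k be a field and K a field with k ⊆ K ⊆ k(t₁, ..., tₙ) such that K has transcendence degree 1 over k. Then K is isomorphic (over k) to a rational function field k(u) in one variable, provided k is algebraically closed of characteristic 0. -/
/-!
Let `x ∈ K` be transcendental over `k`, so that `K` is algebraic over `k[x]`, and write `x = f / g`
with polynomials `f` and `g`. Weights `wᵢ` that separate the finitely many exponents occurring in
`f` and `g` make the substitution `φ : tᵢ ↦ X ^ wᵢ` injective on the `k`-span of `f` and `g`, so
`φ f / φ g` is a nonconstant rational function of `X`. The local ring of the prime `ker φ` is
integrally closed, contains `x`, and inverts every nonzero polynomial in `x`; hence it contains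
`K`, and evaluating along `φ` embeds `K` into `k(X)`. Lüroth's theorem concludes.
-/

section MonomialSubstitution

open Polynomial

variable {σ R : Type*}

theorem exists_natCast_eval_ne_zero [CommRing R] [IsDomain R] [CharZero R]
    {p : MvPolynomial σ R} (hp : p ≠ 0) :
    ∃ w : σ → ℕ, MvPolynomial.eval (fun i => (w i : R)) p ≠ 0 := by
  contrapose! hp
  refine MvPolynomial.funext_set (fun _ => Set.range ((↑) : ℕ → R))
    (fun _ => Set.infinite_range_of_injective Nat.cast_injective) fun v hv => ?_
  choose w hw using fun i => hv i (Set.mem_univ i)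
  rw [← funext hw, hp, map_zero]

theorem exists_injOn_weight (S : Finset (σ →₀ ℕ)) :
    ∃ w : σ → ℕ, Set.InjOn (Finsupp.weight w) (S : Set (σ →₀ ℕ)) := by
  classical
  let linearForm : (σ →₀ ℕ) →+ MvPolynomial σ ℤ := Finsupp.weight MvPolynomial.X
  have eval_linearForm (v : σ → ℤ) (s : σ →₀ ℕ) :
      MvPolynomial.eval v (linearForm s) = Finsupp.weight v s := by
    simp [linearForm, Finsupp.weight_apply, map_finsuppSum]
  have linearForm_injective : Function.Injective linearForm := fun s t hst => by
    ext i
    have := congrArg (MvPolynomial.eval (Pi.single i 1)) hst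
    simpa only [eval_linearForm, Finsupp.weight_single_index, nsmul_one, Nat.cast_inj] using this
  have prod_ne_zero : ∏ p ∈ S.offDiag, (linearForm p.1 - linearForm p.2) ≠ 0 :=
    Finset.prod_ne_zero_iff.2 fun p hp =>
      sub_ne_zero.2 (linearForm_injective.ne (Finset.mem_offDiag.1 hp).2.2)
  obtain ⟨w, hw⟩ := exists_natCast_eval_ne_zero prod_ne_zero
  rw [map_prod, Finset.prod_ne_zero_iff] at hw
  refine ⟨w, fun s hs t ht hst => by_contra fun hne => ?_⟩
  refine hw (s, t) (Finset.mem_offDiag.2 ⟨hs, ht, hne⟩) ?_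
  have weight_natCast (u : σ →₀ ℕ) :
      Finsupp.weight (fun i => (w i : ℤ)) u = Finsupp.weight w u := by
    simp [Finsupp.weight_apply, Finsupp.sum]
  rw [map_sub, eval_linearForm, eval_linearForm, weight_natCast, weight_natCast, hst, sub_self]

variable [CommSemiring R]

variable (R) in
/-- The monomial (Kronecker) substitution `tᵢ ↦ X ^ wᵢ`. It sends each monomial to a power of `X`,
so weights that separate the exponents of a polynomial preserve its coefficients. -/
noncomputable def monomialSubst (w : σ → ℕ) : MvPolynomial σ R →ₐ[R] R[X] :=
  MvPolynomial.aeval fun i => X ^ w i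

theorem monomialSubst_monomial (w : σ → ℕ) (s : σ →₀ ℕ) (c : R) :
    monomialSubst R w (MvPolynomial.monomial s c) = monomial (Finsupp.weight w s) c := by
  simp only [monomialSubst, MvPolynomial.aeval_monomial, Finsupp.weight_apply, Finsupp.prod,
    Finsupp.sum, ← pow_mul, Finset.prod_pow_eq_pow_sum, mul_comm (w _), smul_eq_mul,
    algebraMap_eq, C_mul_X_pow_eq_monomial]

theorem coeff_monomialSubst {w : σ → ℕ} {S : Set (σ →₀ ℕ)}
    (hw : S.InjOn (Finsupp.weight w)) {p : MvPolynomial σ R} (hp : ↑p.support ⊆ S)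
    {s : σ →₀ ℕ} (hs : s ∈ S) :
    (monomialSubst R w p).coeff (Finsupp.weight w s) = p.coeff s := by
  classical
  conv_lhs => rw [p.as_sum, map_sum, finsetSum_coeff]
  simp only [monomialSubst_monomial, coeff_monomial]
  rw [Finset.sum_congr rfl fun t ht => if_congr (hw.eq_iff (hp ht) hs) rfl rfl,
    Finset.sum_ite_eq', ite_eq_left_iff, MvPolynomial.notMem_support_iff]
  exact Eq.symm

theorem injOn_monomialSubst {w : σ → ℕ} {S : Set (σ →₀ ℕ)} (hw : S.InjOn (Finsupp.weight w)) :
    Set.InjOn (monomialSubst R w) (MvPolynomial.restrictSupport R S : Set (MvPolynomial σ R)) := by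
  intro p hp q hq hpq
  have support_p : ↑p.support ⊆ S := (MvPolynomial.mem_restrictSupport_iff R).1 hp
  have support_q : ↑q.support ⊆ S := (MvPolynomial.mem_restrictSupport_iff R).1 hq
  refine MvPolynomial.ext p q fun s => ?_
  by_cases hs : s ∈ S
  · rw [← coeff_monomialSubst hw support_p hs, hpq, coeff_monomialSubst hw support_q hs]
  · rw [MvPolynomial.notMem_support_iff.1 fun h => hs (support_p h),
      MvPolynomial.notMem_support_iff.1 fun h => hs (support_q h)]

theorem exists_algHom_injOn_of_fg {V : Submodule R (MvPolynomial σ R)} (hV : V.FG) :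
    ∃ φ : MvPolynomial σ R →ₐ[R] R[X], Set.InjOn φ (V : Set (MvPolynomial σ R)) := by
  classical
  obtain ⟨T, rfl⟩ := hV
  let S : Finset (σ →₀ ℕ) := T.biUnion MvPolynomial.support
  have span_le : Submodule.span R T ≤ MvPolynomial.restrictSupport R (S : Set (σ →₀ ℕ)) :=
    Submodule.span_le.2 fun q hq =>
      (MvPolynomial.mem_restrictSupport_iff R).2 <|
        Finset.coe_subset.2 (Finset.subset_biUnion_of_mem MvPolynomial.support hq)
  obtain ⟨w, hw⟩ := exists_injOn_weight S
  exact ⟨monomialSubst R w, (injOn_monomialSubst hw).mono span_le⟩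

end MonomialSubstitution

section Specialization

open Polynomial

theorem range_le_range_of_isIntegrallyClosedIn {B R K F : Type*} [CommRing B] [CommRing R]
    [CommRing K] [CommRing F] [Algebra B K] [Algebra.IsAlgebraic B K] [Algebra R F]
    [IsIntegrallyClosedIn R F] (j : K →+* F) (i : B →+* R)
    (hij : (algebraMap R F).comp i = j.comp (algebraMap B K)) (hi : ∀ b ≠ 0, IsUnit (i b)) :
    j.range ≤ (algebraMap R F).range := by
  rintro _ ⟨y, rfl⟩
  obtain ⟨b, hb, hby⟩ := (Algebra.IsAlgebraic.isAlgebraic (R := B) y).exists_integral_multiple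
  obtain ⟨z, hz⟩ := IsIntegrallyClosedIn.isIntegral_iff.1 (hby.map_of_comp_eq i j hij)
  obtain ⟨u, hu⟩ := hi b hb
  refine ⟨↑u⁻¹ * z, ?_⟩
  calc
    algebraMap R F (↑u⁻¹ * z) = algebraMap R F ↑u⁻¹ * (algebraMap R F (i b) * j y) := by
      rw [map_mul, hz, Algebra.smul_def, map_mul, ← RingHom.comp_apply j, ← hij,
        RingHom.comp_apply]
    _ = j y := by rw [← mul_assoc, ← map_mul, ← hu, u.inv_mul, map_one, one_mul]

variable {k A K F L : Type*} [CommRing k] [CommRing A] [CommRing K] [CommRing F] [Field L]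
  [Algebra k A] [Algebra k K] [Algebra k F] [Algebra k L] [Algebra A F] [IsScalarTower k A F]

theorem nonempty_algHom_of_isLocalHom {O : Subalgebra A F} [IsIntegrallyClosedIn O F]
    (ψ : O →ₐ[k] L) [IsLocalHom ψ] (j : K →ₐ[k] F) {x : K}
    [Algebra.IsAlgebraic (Algebra.adjoin k {x}) K] {z : O} (hz : z = j x)
    (hψz : Transcendental k (ψ z)) : Nonempty (K →ₐ[k] L) := by
  have map_aeval (p : k[X]) : aeval z p = j (aeval x p) := by
    rw [← aeval_algHom_apply, ← hz]
    exact (aeval_algHom_apply (O.val.restrictScalars k) z p).symm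
  have mem (b : Algebra.adjoin k {x}) : j b ∈ O := by
    obtain ⟨p, hp⟩ := Algebra.adjoin_mem_exists_aeval k x b.2
    exact hp ▸ map_aeval p ▸ (aeval z p).2
  let i : Algebra.adjoin k {x} →+* O :=
    ((j : K →+* F).comp (algebraMap (Algebra.adjoin k {x}) K)).codRestrict O mem
  have isUnit_i (b : Algebra.adjoin k {x}) (hb : b ≠ 0) : IsUnit (i b) := by
    obtain ⟨p, hp⟩ := Algebra.adjoin_mem_exists_aeval k x b.2
    have hib : i b = aeval z p := Subtype.ext (by rw [map_aeval, hp]; rfl)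
    refine isUnit_of_map_unit ψ _ (isUnit_iff_ne_zero.2 fun h => hb (Subtype.ext ?_))
    rw [hib, ← aeval_algHom_apply] at h
    rw [← hp, transcendental_iff.1 hψz p h, map_zero]; rfl
  have range_le := range_le_range_of_isIntegrallyClosedIn (j : K →+* F) i rfl isUnit_i
  have hj (y : K) : j y ∈ O.restrictScalars k := by
    obtain ⟨o, ho⟩ := range_le ⟨y, rfl⟩
    exact (congrArg (· ∈ O) ho).mp o.2
  exact ⟨ψ.comp (j.codRestrict (O.restrictScalars k) hj)⟩

end Specialization

section LocalRing

attribute [local instance] RingHom.ker_isPrime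

variable {k A L : Type*} (F : Type*) [CommRing k] [CommRing A] [IsDomain A] [Field F] [Field L]
  [Algebra k A] [Algebra k L] [Algebra A F] [IsFractionRing A F]

/-- The localization of `A` at the prime ideal `ker φ`, realized inside the fraction field `F` of
`A` as the `A`-subalgebra of the fractions `a / s` with `φ s ≠ 0`. -/
noncomputable def localRing (φ : A →ₐ[k] L) : Subalgebra A F :=
  Localization.subalgebra.ofField F (RingHom.ker φ).primeCompl
    (Ideal.primeCompl_le_nonZeroDivisors _)

instance localRing.isLocalization_atPrime (φ : A →ₐ[k] L) :
    IsLocalization.AtPrime (localRing F φ) (RingHom.ker φ) :=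
  Localization.subalgebra.isLocalization_ofField ..

instance localRing.isIntegrallyClosedIn [IsIntegrallyClosed A] (φ : A →ₐ[k] L) :
    IsIntegrallyClosedIn (localRing F φ) F :=
  (isIntegrallyClosed_iff_isIntegrallyClosedIn F).1 <|
    isIntegrallyClosed_of_isLocalization _ _ (RingHom.ker φ).primeCompl_le_nonZeroDivisors

theorem algebraMap_div_mem_localRing {φ : A →ₐ[k] L} (a : A) {s : A} (hs : φ s ≠ 0) :
    algebraMap A F a / algebraMap A F s ∈ localRing F φ :=
  ⟨a, s, hs, div_eq_mul_inv _ _⟩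

variable [Algebra k F] [IsScalarTower k A F]

/-- The extension `a / s ↦ φ a / φ s` of `φ` to the local ring of its kernel: evaluation of
fractions at the point defined by `φ`. -/
noncomputable def evalLocalRing (φ : A →ₐ[k] L) : localRing F φ →ₐ[k] L :=
  IsLocalization.liftAlgHom (M := (RingHom.ker φ).primeCompl) (f := φ) fun s =>
    isUnit_iff_ne_zero.2 s.2

instance evalLocalRing.isLocalHom (φ : A →ₐ[k] L) : IsLocalHom (evalLocalRing F φ) where
  map_nonunit z hz := by
    obtain ⟨a, s, rfl⟩ := IsLocalization.exists_mk'_eq (RingHom.ker φ).primeCompl z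
    rw [IsLocalization.AtPrime.isUnit_mk'_iff]
    refine RingHom.mem_ker.not.2 fun ha => hz.ne_zero ?_
    rw [evalLocalRing, IsLocalization.coe_liftAlgHom, IsLocalization.lift_mk'_spec]
    simpa using ha

theorem evalLocalRing_div {φ : A →ₐ[k] L} (a : A) {s : A} (hs : φ s ≠ 0) :
    evalLocalRing F φ ⟨_, algebraMap_div_mem_localRing F a hs⟩ = φ a / φ s := by
  have hs₀ : algebraMap A F s ≠ 0 := by
    rw [Ne, FaithfulSMul.algebraMap_eq_zero_iff]
    exact ne_zero_of_map hs
  have div_eq_mk' : (⟨_, algebraMap_div_mem_localRing F a hs⟩ : localRing F φ) =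
      IsLocalization.mk' _ a (⟨s, hs⟩ : (RingHom.ker φ).primeCompl) :=
    IsLocalization.eq_mk'_iff_mul_eq.2 <| Subtype.ext (div_mul_cancel₀ _ hs₀)
  rw [div_eq_mk', evalLocalRing, IsLocalization.coe_liftAlgHom, IsLocalization.lift_mk'_spec]
  exact (mul_div_cancel₀ _ hs).symm

end LocalRing

section RationalFunctionField

open Polynomial

variable {k : Type*} [Field k]

theorem nonempty_algEquiv_ratFunc {K : Type*} [Field K] [Algebra k K]
    [Algebra.Transcendental k K] (θ : K →ₐ[k] RatFunc k) : Nonempty (K ≃ₐ[k] RatFunc k) := by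
  have fieldRange_ne_bot : θ.fieldRange ≠ ⊥ := by
    intro h
    obtain ⟨x, hx⟩ := Algebra.Transcendental.transcendental (R := k) (A := K)
    have hθx : θ x ∈ (⊥ : IntermediateField k (RatFunc k)) := h ▸ ⟨x, rfl⟩
    obtain ⟨c, hc⟩ := IntermediateField.mem_bot.1 hθx
    refine hx ((isAlgebraic_algHom_iff θ θ.injective).1 ?_)
    exact hc ▸ isAlgebraic_algebraMap c
  exact ⟨(AlgEquiv.ofInjectiveField θ).trans (RatFunc.Luroth.algEquiv fieldRange_ne_bot).symm⟩

theorem transcendental_algebraMap_div {a b : k[X]} (hb : b ≠ 0) (hab : ∀ c : k, a ≠ c • b) :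
    Transcendental k (algebraMap k[X] (RatFunc k) a / algebraMap k[X] (RatFunc k) b) := by
  refine RatFunc.transcendental_of_ne_C _ ?_
  rintro ⟨c, hc⟩
  refine hab c (RatFunc.algebraMap_injective k ?_)
  rwa [div_eq_iff (RatFunc.algebraMap_ne_zero hb), ← RatFunc.algebraMap_C, ← map_mul,
    ← smul_eq_C_mul] at hc

theorem exists_algHom_transcendental_div {σ : Type*} {f g : MvPolynomial σ k} (hg : g ≠ 0)
    (hfg : ∀ c : k, f ≠ c • g) :
    ∃ φ : MvPolynomial σ k →ₐ[k] RatFunc k, φ g ≠ 0 ∧ Transcendental k (φ f / φ g) := by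
  obtain ⟨φ, hφ⟩ := exists_algHom_injOn_of_fg (Submodule.fg_span (R := k) (Set.toFinite {f, g}))
  have hf_mem := Submodule.subset_span (R := k) (Set.mem_insert f {g})
  have hg_mem := Submodule.subset_span (R := k) (Set.mem_insert_of_mem f (Set.mem_singleton g))
  have hφg : φ g ≠ 0 := fun h => hg (hφ hg_mem (zero_mem _) (h.trans (map_zero φ).symm))
  have hφfg (c : k) : φ f ≠ c • φ g := by
    rw [← map_smul]
    exact hφ.ne hf_mem (Submodule.smul_mem _ c hg_mem) (hfg c)
  exact ⟨(IsScalarTower.toAlgHom k k[X] (RatFunc k)).comp φ, RatFunc.algebraMap_ne_zero hφg,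
    transcendental_algebraMap_div hφg hφfg⟩

theorem nonempty_algHom_ratFunc (σ : Type*) {K F : Type*} [Field K] [Algebra k K] [Field F]
    [Algebra (MvPolynomial σ k) F] [IsFractionRing (MvPolynomial σ k) F] [Algebra k F]
    [IsScalarTower k (MvPolynomial σ k) F] (j : K →ₐ[k] F) {x : K} (hx : Transcendental k x)
    [Algebra.IsAlgebraic (Algebra.adjoin k {x}) K] : Nonempty (K →ₐ[k] RatFunc k) := by
  obtain ⟨f, g, hg, hfg⟩ := IsFractionRing.div_surjective (MvPolynomial σ k) (j x)
  have hg₀ : g ≠ 0 := nonZeroDivisors.ne_zero hg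
  have not_proportional (c : k) : f ≠ c • g := by
    rintro rfl
    have hgF : algebraMap (MvPolynomial σ k) F g ≠ 0 := by
      rwa [Ne, FaithfulSMul.algebraMap_eq_zero_iff]
    have hjx : algebraMap k F c = j x := by
      rw [← hfg, Algebra.smul_def, map_mul, ← IsScalarTower.algebraMap_apply,
        mul_div_cancel_right₀ _ hgF]
    exact hx ((isAlgebraic_algHom_iff j j.injective).1 (hjx ▸ isAlgebraic_algebraMap c))
  obtain ⟨φ, hφg, hφ⟩ := exists_algHom_transcendental_div hg₀ not_proportional
  refine nonempty_algHom_of_isLocalHom (evalLocalRing F φ) j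
    (z := ⟨_, algebraMap_div_mem_localRing F f hφg⟩) hfg ?_
  rwa [evalLocalRing_div F f hφg]

end RationalFunctionField

theorem intermediate_field_trdeg_one_is_rational_general {k σ F : Type*} [Field k] [Field F]
    [Algebra (MvPolynomial σ k) F] [IsFractionRing (MvPolynomial σ k) F] [Algebra k F]
    [IsScalarTower k (MvPolynomial σ k) F] (K : IntermediateField k F)
    (htr : ∃ x : K, IsTranscendenceBasis k (fun _ : Unit => x)) :
    Nonempty (K ≃ₐ[k] RatFunc k) := by
  obtain ⟨x, hx⟩ := htr
  have hx_tr : Transcendental k x := hx.1.transcendental ()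
  have : Algebra.Transcendental k K := ⟨x, hx_tr⟩
  have : Algebra.IsAlgebraic (Algebra.adjoin k {x}) K := by
    have isAlgebraic_adjoin_range := hx.isAlgebraic
    rwa [Set.range_const] at isAlgebraic_adjoin_range
  obtain ⟨θ⟩ := nonempty_algHom_ratFunc σ K.val hx_tr
  exact nonempty_algEquiv_ratFunc θ

/-- Let `k` be an algebraically closed field of characteristic `0` and `K` an
intermediate field `k ⊆ K ⊆ k(t₁, …, tₙ)` of the rational function field in `n`
variables, such that `K` has transcendence degree `1` over `k` (it admits a
transcendence basis consisting of a single element).  Then `K` is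
`k`-isomorphic to the rational function field `k(u)` in one variable. -/
theorem intermediate_field_trdeg_one_is_rational
    (k : Type*) [Field k] [IsAlgClosed k] [CharZero k]
    (n : ℕ)
    (K : IntermediateField k (FractionRing (MvPolynomial (Fin n) k)))
    (htr : ∃ x : K, IsTranscendenceBasis k (fun _ : Unit => x)) :
    Nonempty (K ≃ₐ[k] RatFunc k) :=
  intermediate_field_trdeg_one_is_rational_general (σ := Fin n) K htr
end
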